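/- arXiv:2109.07941 — 6 statements merged into one kernel-verified Lean document; each statement's English description precedes it below -/
import Mathlib

section
/- Let (X,μ,T) be a measure-preserving system, k and N positive integers, and S a finite set of integers. Let e_{i,n,N} ∈ S for 1 ≤ i ≤ k and 1 ≤ n ≤ N, let a_{1,N},…,a_{k,N} : ℕ → ℤ, let c'_{n,N} be complex numbers with |c'_{n,N}| ≤ 1, and let f_{1,N},…,f_{k,N} ∈ L^∞(μ) with ‖f_{i,N}‖_∞ ≤ 1. Then there is a constant C depending only on k and S (not on N, the system, or the functions) such that ‖(1/N)∑_{n=1}^N c'_{n,N} ∏_{i=1}^k f_{i,N}∘T^{a_{i,N}(n)+e_{i,n,N}}‖_{L²(μ)} ≤ C · sup ‖(1/N)∑_{n=1}^N c_{n,N} (f_{1,N}∘T^{a_{1,N}(n)}) ∏_{i=2}^k g_i∘T^{a_{i,N}(n)}‖_{L²(μ)}, where the supremum is over all complex sequences (c_{n,N}) with |c_{n,N}| ≤ 1 and all g_2,…,g_k ∈ L^∞(μ) with ‖g_i‖_∞ ≤ 1. -/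
/-!
The vector of errors `(e 1 n, …, e k n)` takes at most `|S| ^ k` values, so the average splits as
the sum over `v ∈ S ^ k` of the averages whose weights are cut off to those `n` with error vector
`v`. In each piece the errors are constant in `n`, so composing with the
measure-preserving map `T ^ (-v 1)` shows that its norm is that of an average with no error on the
first function and with `f i` replaced by `f i ∘ T ^ (v i - v 1)` for the others, which is one of
the averages in the supremum. The triangle inequality gives the bound with `C = |S| ^ k`.
-/

open Filter MeasureTheory Topology
open scoped ENNReal

noncomputable section

/-- Error terms taking values in a finite set `S` in the iterates of a
multiple ergodic average can be absorbed: the `L²`-norm of the average with the perturbed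
iterates is bounded by a constant (depending only on `k` and `S`) times the supremum, over
all 1-bounded weights `c` and all 1-bounded measurable functions `g_2, …, g_k`, of the
`L²`-norm of the corresponding unperturbed average. -/
theorem statement10 (k : ℕ) (hk : 0 < k) (S : Finset ℤ) :
    ∃ C : ℝ≥0∞, C ≠ ⊤ ∧
      ∀ (X : Type*) (_ : MeasurableSpace X) (μ : Measure X), IsProbabilityMeasure μ →
      ∀ (T : ℤ → X → X), (∀ n : ℤ, MeasurePreserving (T n) μ μ) → T 0 = id →
        (∀ m n : ℤ, T (m + n) = T m ∘ T n) →
      ∀ (N : ℕ), 0 < N →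
      ∀ (e : Fin k → ℕ → ℤ), (∀ i n, e i n ∈ S) →
      ∀ (a : Fin k → ℕ → ℤ),
      ∀ (c' : ℕ → ℂ), (∀ n, ‖c' n‖ ≤ 1) →
      ∀ (f : Fin k → X → ℂ), (∀ i, Measurable (f i)) → (∀ i x, ‖f i x‖ ≤ 1) →
        eLpNorm (fun x =>
            (N : ℂ)⁻¹ * ∑ n ∈ Finset.Icc 1 N, c' n * ∏ i, f i (T (a i n + e i n) x)) 2 μ ≤
          C * ⨆ (c : {c : ℕ → ℂ // ∀ n, ‖c n‖ ≤ 1})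
                (g : {g : Fin k → X → ℂ // ∀ i, Measurable (g i) ∧ ∀ x, ‖g i x‖ ≤ 1}),
              eLpNorm (fun x =>
                (N : ℂ)⁻¹ * ∑ n ∈ Finset.Icc 1 N, c.1 n *
                  (f ⟨0, hk⟩ (T (a ⟨0, hk⟩ n) x) *
                    ∏ i ∈ Finset.univ.erase ⟨0, hk⟩, g.1 i (T (a i n) x))) 2 μ := by
  refine ⟨((Fintype.piFinset (fun _ : Fin k => S)).card : ℝ≥0∞), ENNReal.natCast_ne_top _, ?_⟩
  intro X _ μ _ T hT hT0 hTadd N hN e he a c' hc' f hf hf1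
  set z : Fin k := ⟨0, hk⟩ with hz
  -- `c v` keeps the weights with error vector `v`; `g v` absorbs the errors relative to `v z`.
  let c : (Fin k → ℤ) → ℕ → ℂ := fun v n => if (fun i => e i n) = v then c' n else 0
  let g : (Fin k → ℤ) → Fin k → X → ℂ := fun v i x => f i (T (v i - v z) x)
  let G : (Fin k → ℤ) → X → ℂ := fun v x =>
    (N : ℂ)⁻¹ * ∑ n ∈ Finset.Icc 1 N, c v n *
      (f z (T (a z n) x) * ∏ i ∈ Finset.univ.erase z, g v i (T (a i n) x))
  have hc : ∀ v n, ‖c v n‖ ≤ 1 := by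
    intro v n
    simp only [c]
    split_ifs
    · exact hc' n
    · simp
  have hg : ∀ v i, Measurable (g v i) ∧ ∀ x, ‖g v i x‖ ≤ 1 := fun v i =>
    ⟨(hf i).comp (hT _).measurable, fun x => hf1 i _⟩
  have hG : ∀ v, Measurable (G v) := by
    intro v
    refine measurable_const.mul (Finset.measurable_sum _ fun n _ => measurable_const.mul ?_)
    exact ((hf z).comp (hT _).measurable).mul
      (Finset.measurable_prod _ fun i _ => (hg v i).1.comp (hT _).measurable)
  have hshift : ∀ v n x, f z (T (a z n) (T (v z) x)) *
      ∏ i ∈ Finset.univ.erase z, g v i (T (a i n) (T (v z) x)) =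
        ∏ i, f i (T (a i n + v i) x) := by
    intro v n x
    rw [← Finset.mul_prod_erase Finset.univ _ (Finset.mem_univ z)]
    congr 1
    · rw [hTadd]; rfl
    · refine Finset.prod_congr rfl fun i _ => ?_
      have h : a i n + v i = (v i - v z) + (a i n + v z) := by ring
      rw [h, hTadd, hTadd]; rfl
  have hsplit : (fun x =>
      (N : ℂ)⁻¹ * ∑ n ∈ Finset.Icc 1 N, c' n * ∏ i, f i (T (a i n + e i n) x)) =
      ∑ v ∈ Fintype.piFinset (fun _ : Fin k => S), G v ∘ T (v z) := by
    funext x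
    simp only [Finset.sum_apply, Function.comp_apply, G]
    rw [← Finset.mul_sum, Finset.sum_comm]
    congr 1
    refine Finset.sum_congr rfl fun n _ => ?_
    simp only [c, ite_mul, zero_mul]
    rw [Finset.sum_ite_eq, if_pos (Fintype.mem_piFinset.2 fun i => he i n)]
    exact congrArg (c' n * ·) (hshift (fun i => e i n) n x).symm
  rw [hsplit]
  refine (eLpNorm_sum_le (fun v _ =>
    ((hG v).comp (hT _).measurable).aestronglyMeasurable) one_le_two).trans ?_
  rw [← nsmul_eq_mul]
  refine Finset.sum_le_card_nsmul _ _ _ fun v _ => ?_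
  rw [eLpNorm_comp_measurePreserving (hG v).aestronglyMeasurable (hT _)]
  exact le_iSup₂_of_le (⟨c v, hc v⟩ : {c : ℕ → ℂ // ∀ n, ‖c n‖ ≤ 1})
    (⟨g v, hg v⟩ : {g : Fin k → X → ℂ // ∀ i, Measurable (g i) ∧ ∀ x, ‖g i x‖ ≤ 1}) le_rfl
end
end

section
/- Let d be a positive integer and let (A_{R,n})_{R,n∈ℕ} be a two-parameter sequence in a normed space with ‖A_{R,n}‖ ≤ 1 for all R,n. Let L ∈ H be an eventually positive function with 1 ≺ L(t) and L(t) ≺ t, and suppose that limsup_{R→∞} (1/R)∑_{r=1}^R ‖(1/(⌊L(r)⌋+1))∑_{n=r}^{r+⌊L(r)⌋} A_{R,n}‖^d ≤ C for some C > 0. Then limsup_{R→∞} ‖(1/R)∑_{n=1}^R A_{R,n}‖ ≤ C^{1/d}. -/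
/-!
The proof compares the plain average of `A R` over `[1, R]` with the average of its averages over
the windows `[r, r + ⌊L r⌋]`, `1 ≤ r ≤ R`. In the latter, the index `n` carries the weight
`w n = ∑ 1 / (⌊L r⌋ + 1)`, summed over those `r` whose window contains `n`; for `n ≤ R` this does
not depend on `R`.

Because `L` and `ε t - L t` are Hardy field functions tending to `+∞`, both are eventually
monotone, so `L` is eventually monotone and `ε`-Lipschitz for every `ε > 0`. Therefore all
windows containing a large `n` have length about `L n`, there are about `L n` of them, and
`w n → 1` (`tendsto_totalWeight`). The windows have total mass exactly `R`, so the mass that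
falls beyond `R` is at most `∑_{n ≤ R} |w n - 1|`, and the two averages differ by at most
`(2 / R) ∑_{n ≤ R} |w n - 1|` (`norm_sum_avg_sub_sum_le`), which tends to `0` by Cesàro.
The power mean inequality then bounds the mean of the norms of the window averages by the
`1/d`-th power of the mean of their `d`-th powers.
-/

open Filter MeasureTheory Topology

noncomputable section

/-- A (simplified) Hardy field: a set of real functions, identified up to eventual equality
at `+∞`, that forms a field of germs closed under differentiation, contains all
logarithmico-exponential functions (generated by constants, the identity, field operations,
`exp` and `log`), and is closed under composition and compositional inversion of functions
tending to `+∞`. -/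
structure HardyField : Type where
  carrier : Set (ℝ → ℝ)
  mem_congr : ∀ {f g : ℝ → ℝ}, f ∈ carrier → f =ᶠ[atTop] g → g ∈ carrier
  smooth : ∀ f ∈ carrier, ∃ a : ℝ, ContDiffOn ℝ (⊤ : ℕ∞) f (Set.Ioi a)
  zero_mem : (0 : ℝ → ℝ) ∈ carrier
  one_mem : (1 : ℝ → ℝ) ∈ carrier
  add_mem : ∀ {f g : ℝ → ℝ}, f ∈ carrier → g ∈ carrier → f + g ∈ carrier
  neg_mem : ∀ {f : ℝ → ℝ}, f ∈ carrier → -f ∈ carrier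
  mul_mem : ∀ {f g : ℝ → ℝ}, f ∈ carrier → g ∈ carrier → f * g ∈ carrier
  inv_mem : ∀ {f : ℝ → ℝ}, f ∈ carrier → ¬f =ᶠ[atTop] (0 : ℝ → ℝ) →
    ∃ g ∈ carrier, f * g =ᶠ[atTop] (1 : ℝ → ℝ)
  deriv_mem : ∀ {f : ℝ → ℝ}, f ∈ carrier → deriv f ∈ carrier
  id_mem : (fun x : ℝ => x) ∈ carrier
  const_mem : ∀ c : ℝ, (fun _ : ℝ => c) ∈ carrier
  exp_comp_mem : ∀ {f : ℝ → ℝ}, f ∈ carrier → (fun x => Real.exp (f x)) ∈ carrier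
  log_comp_mem : ∀ {f : ℝ → ℝ}, f ∈ carrier → Tendsto f atTop atTop →
    (fun x => Real.log (f x)) ∈ carrier
  comp_mem : ∀ {f g : ℝ → ℝ}, f ∈ carrier → g ∈ carrier → Tendsto g atTop atTop →
    (f ∘ g) ∈ carrier
  compInv_mem : ∀ {g : ℝ → ℝ}, g ∈ carrier → Tendsto g atTop atTop →
    ∃ h ∈ carrier, Tendsto h atTop atTop ∧ (fun x => g (h x)) =ᶠ[atTop] fun x : ℝ => x

/-! ### Eventual monotonicity in Hardy fields -/

/-- A function in a Hardy field is monotone or antitone near `+∞`: its derivative is either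
eventually zero or has an inverse germ, hence eventually has no zeros, and Darboux's theorem
gives it a constant sign. -/
lemma HardyField.monotoneOn_or_antitoneOn (H : HardyField) {f : ℝ → ℝ} (hf : f ∈ H.carrier) :
    ∃ a : ℝ, MonotoneOn f (Set.Ici a) ∨ AntitoneOn f (Set.Ici a) := by
  obtain ⟨a, ha⟩ := H.smooth f hf
  have hdiff : ∀ x, a < x → DifferentiableAt ℝ f x := fun x hx =>
    (ha.differentiableOn (by simp)).differentiableAt (Ioi_mem_nhds hx)
  have hcont : ∀ b, a < b → ContinuousOn f (Set.Ici b) := fun b hb x hx =>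
    (hdiff x (lt_of_lt_of_le hb hx)).continuousAt.continuousWithinAt
  have hdon : ∀ b, a < b → DifferentiableOn ℝ f (interior (Set.Ici b)) := fun b hb x hx =>
    (hdiff x (lt_of_lt_of_le hb (interior_subset hx))).differentiableWithinAt
  by_cases h0 : deriv f =ᶠ[atTop] (0 : ℝ → ℝ)
  · obtain ⟨b, hb⟩ := eventually_atTop.1 h0
    have hab : a < max (a + 1) b := lt_of_lt_of_le (by linarith) (le_max_left _ _)
    refine ⟨max (a + 1) b, Or.inl ?_⟩
    refine monotoneOn_of_deriv_nonneg (convex_Ici _) (hcont _ hab) (hdon _ hab) ?_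
    intro x hx
    exact (hb x (le_trans (le_max_right _ _) (interior_subset hx))).ge
  · obtain ⟨g, -, hg⟩ := H.inv_mem (H.deriv_mem hf) h0
    obtain ⟨b, hb⟩ := eventually_atTop.1 hg
    have hab : a < max (a + 1) b := lt_of_lt_of_le (by linarith) (le_max_left _ _)
    have hne : ∀ x ∈ Set.Ici (max (a + 1) b), deriv f x ≠ 0 := by
      intro x hx h
      have := hb x (le_trans (le_max_right _ _) hx)
      simp [h] at this
    refine ⟨max (a + 1) b, ?_⟩
    rcases hasDerivWithinAt_forall_lt_or_forall_gt_of_forall_ne (convex_Ici (max (a + 1) b))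
      (fun x hx => (hdiff x (lt_of_lt_of_le hab hx)).hasDerivAt.hasDerivWithinAt) hne with h | h
    · exact Or.inr (antitoneOn_of_deriv_nonpos (convex_Ici _) (hcont _ hab) (hdon _ hab)
        fun x hx => (h x (interior_subset hx)).le)
    · exact Or.inl (monotoneOn_of_deriv_nonneg (convex_Ici _) (hcont _ hab) (hdon _ hab)
        fun x hx => (h x (interior_subset hx)).le)

lemma HardyField.monotoneOn_of_tendsto (H : HardyField) {f : ℝ → ℝ} (hf : f ∈ H.carrier)
    (h : Tendsto f atTop atTop) : ∃ a : ℝ, MonotoneOn f (Set.Ici a) := by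
  obtain ⟨a, ha | ha⟩ := H.monotoneOn_or_antitoneOn hf
  · exact ⟨a, ha⟩
  · exfalso
    obtain ⟨x, hx, hxa⟩ := ((h.eventually_gt_atTop (f a)).and (eventually_ge_atTop a)).exists
    exact absurd (ha (Set.mem_Ici.2 le_rfl) hxa hxa) (not_le.2 hx)

/-- Sublinearity upgrades to an eventual Lipschitz bound with arbitrarily small constant:
`ε t - L t` lies in `H` and tends to `+∞`, so it is eventually monotone. -/
lemma HardyField.sub_le_of_sublinear (H : HardyField) {L : ℝ → ℝ} (hL : L ∈ H.carrier)
    (hLt : Tendsto (fun t => L t / t) atTop (𝓝 0)) {ε : ℝ} (hε : 0 < ε) :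
    ∃ a : ℝ, ∀ s t, a ≤ s → s ≤ t → L t - L s ≤ ε * (t - s) := by
  have hmem : (fun _ : ℝ => ε) * (fun x : ℝ => x) + -L ∈ H.carrier :=
    H.add_mem (H.mul_mem (H.const_mem ε) H.id_mem) (H.neg_mem hL)
  have htend : Tendsto ((fun _ : ℝ => ε) * (fun x : ℝ => x) + -L) atTop atTop := by
    have h1 : ∀ᶠ t : ℝ in atTop, ε / 2 * t ≤ ((fun _ : ℝ => ε) * (fun x : ℝ => x) + -L) t := by
      filter_upwards [hLt.eventually_lt_const (half_pos hε), eventually_gt_atTop 0] with t ht h0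
      rw [div_lt_iff₀ h0] at ht
      simp only [Pi.add_apply, Pi.mul_apply, Pi.neg_apply]
      linarith
    exact tendsto_atTop_mono' _ h1 (tendsto_id.const_mul_atTop (half_pos hε))
  obtain ⟨a, ha⟩ := H.monotoneOn_of_tendsto hmem htend
  refine ⟨a, fun s t hs hst => ?_⟩
  have := ha (Set.mem_Ici.2 hs) (Set.mem_Ici.2 (hs.trans hst)) hst
  simp only [Pi.add_apply, Pi.mul_apply, Pi.neg_apply] at this
  linarith

/-! ### Window weights -/

/-- The weight of the index `n` in the window starting at `r`, where windows are
`[r, r + ℓ r]` and each carries the uniform probability measure. -/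
def windowWeight (ℓ : ℕ → ℕ) (r n : ℕ) : ℝ :=
  if r ≤ n ∧ n ≤ r + ℓ r then ((ℓ r : ℝ) + 1)⁻¹ else 0

lemma windowWeight_nonneg (ℓ : ℕ → ℕ) (r n : ℕ) : 0 ≤ windowWeight ℓ r n := by
  unfold windowWeight
  split_ifs <;> positivity

/-- The total weight received by `n` from all windows starting in `[1, n]`. Windows starting
after `n` do not contain `n`, so this is the weight from all windows. -/
def totalWeight (ℓ : ℕ → ℕ) (n : ℕ) : ℝ := ∑ r ∈ Finset.Icc 1 n, windowWeight ℓ r n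

/-- Summing against the weights of one window gives the average over that window, provided the
range of summation contains it. -/
lemma sum_windowWeight_smul {E : Type*} [NormedAddCommGroup E] [NormedSpace ℝ E]
    (ℓ : ℕ → ℕ) (a : ℕ → E) {r T : ℕ} (hr : 1 ≤ r) (hT : r + ℓ r ≤ T) :
    ∑ n ∈ Finset.Icc 1 T, windowWeight ℓ r n • a n
      = ((ℓ r : ℝ) + 1)⁻¹ • ∑ n ∈ Finset.Icc r (r + ℓ r), a n := by
  rw [Finset.smul_sum]
  symm
  have hsub : Finset.Icc r (r + ℓ r) ⊆ Finset.Icc 1 T := Finset.Icc_subset_Icc hr hT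
  rw [← Finset.sum_subset hsub]
  · refine Finset.sum_congr rfl fun n hn => ?_
    rw [windowWeight, if_pos (Finset.mem_Icc.1 hn)]
  · intro n _ hn
    rw [windowWeight, if_neg (fun h => hn (Finset.mem_Icc.2 h)), zero_smul]

/-- Replacing a sequence bounded by `1` by its window averages changes the sum over `[1, R]` by at most
`2 ∑ |w n - 1|`. The weight spilling over beyond `R` is controlled because all windows together
have mass exactly `R`. -/
lemma norm_sum_avg_sub_sum_le {E : Type*} [NormedAddCommGroup E] [NormedSpace ℝ E]
    (ℓ : ℕ → ℕ) (a : ℕ → E) (ha : ∀ n, ‖a n‖ ≤ 1) (R : ℕ) :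
    ‖∑ r ∈ Finset.Icc 1 R, ((ℓ r : ℝ) + 1)⁻¹ • ∑ n ∈ Finset.Icc r (r + ℓ r), a n
        - ∑ n ∈ Finset.Icc 1 R, a n‖
      ≤ 2 * ∑ n ∈ Finset.Icc 1 R, |totalWeight ℓ n - 1| := by
  set T := R + ∑ r ∈ Finset.Icc 1 R, ℓ r with hTdef
  have hT : ∀ r ∈ Finset.Icc 1 R, r + ℓ r ≤ T := fun r hr =>
    Nat.add_le_add (Finset.mem_Icc.1 hr).2
      (Finset.single_le_sum (f := ℓ) (fun _ _ => Nat.zero_le _) hr)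
  have hRT : R ≤ T := Nat.le_add_right _ _
  set W : ℕ → ℝ := fun n => ∑ r ∈ Finset.Icc 1 R, windowWeight ℓ r n with hW
  set χ : ℕ → ℝ := fun n => if n ≤ R then 1 else 0 with hχ
  have hfilter : (Finset.Icc 1 T).filter (fun n => n ≤ R) = Finset.Icc 1 R := by
    ext n
    simp only [Finset.mem_filter, Finset.mem_Icc]
    omega
  have h1 : ∑ r ∈ Finset.Icc 1 R, ((ℓ r : ℝ) + 1)⁻¹ • ∑ n ∈ Finset.Icc r (r + ℓ r), a n
      = ∑ n ∈ Finset.Icc 1 T, W n • a n := by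
    simp only [hW, Finset.sum_smul]
    rw [Finset.sum_comm]
    refine Finset.sum_congr rfl fun r hr => ?_
    rw [sum_windowWeight_smul ℓ a (Finset.mem_Icc.1 hr).1 (hT r hr)]
  have h2 : ∑ n ∈ Finset.Icc 1 R, a n = ∑ n ∈ Finset.Icc 1 T, χ n • a n := by
    simp only [hχ, ite_smul, one_smul, zero_smul]
    rw [← Finset.sum_filter, hfilter]
  have hmass : ∑ n ∈ Finset.Icc 1 T, W n = R := by
    simp only [hW]
    rw [Finset.sum_comm]
    have : ∀ r ∈ Finset.Icc 1 R, ∑ n ∈ Finset.Icc 1 T, windowWeight ℓ r n = 1 := by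
      intro r hr
      have := sum_windowWeight_smul ℓ (fun _ => (1 : ℝ)) (Finset.mem_Icc.1 hr).1 (hT r hr)
      simp only [smul_eq_mul, mul_one] at this
      rw [this]
      simp only [Finset.sum_const, Nat.card_Icc, nsmul_eq_mul, mul_one]
      have e : r + ℓ r + 1 - r = ℓ r + 1 := by omega
      rw [e]
      push_cast
      exact inv_mul_cancel₀ (by positivity)
    rw [Finset.sum_congr rfl this]
    simp
  have hχmass : ∑ n ∈ Finset.Icc 1 T, χ n = R := by
    simp only [hχ]
    rw [← Finset.sum_filter, hfilter]
    simp
  have hWw : ∀ n ∈ Finset.Icc 1 R, W n = totalWeight ℓ n := by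
    intro n hn
    simp only [hW, totalWeight]
    symm
    refine Finset.sum_subset (Finset.Icc_subset_Icc le_rfl (Finset.mem_Icc.1 hn).2) ?_
    intro r hr hr'
    rw [windowWeight, if_neg]
    simp only [Finset.mem_Icc] at hr hr'
    omega
  have hWnn : ∀ n, 0 ≤ W n := fun n => Finset.sum_nonneg fun r _ => windowWeight_nonneg ℓ r n
  rw [h1, h2, ← Finset.sum_sub_distrib]
  calc ‖∑ n ∈ Finset.Icc 1 T, (W n • a n - χ n • a n)‖
      ≤ ∑ n ∈ Finset.Icc 1 T, |W n - χ n| := by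
        refine (norm_sum_le _ _).trans (Finset.sum_le_sum fun n _ => ?_)
        rw [← sub_smul, norm_smul, Real.norm_eq_abs]
        exact mul_le_of_le_one_right (abs_nonneg _) (ha n)
    _ ≤ ∑ n ∈ Finset.Icc 1 T, (2 * (if n ≤ R then |W n - 1| else 0) + (W n - χ n)) := by
        refine Finset.sum_le_sum fun n _ => ?_
        simp only [hχ]
        split_ifs with h
        · linarith [neg_abs_le (W n - 1)]
        · simp [abs_of_nonneg (hWnn n)]
    _ = 2 * ∑ n ∈ Finset.Icc 1 R, |totalWeight ℓ n - 1| := by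
        rw [Finset.sum_add_distrib, Finset.sum_sub_distrib, hmass, hχmass, sub_self, add_zero,
          ← Finset.mul_sum, ← Finset.sum_filter, hfilter]
        congr 1
        exact Finset.sum_congr rfl fun n hn => by rw [hWw n hn]

/-- If the window lengths tend to infinity, eventually increase and vary slowly, every large `n` receives total weight
close to `1`: with `M = ℓ n`, the windows containing `n` start at about `M` consecutive points,
and each has length about `M`. -/
lemma tendsto_totalWeight (ℓ : ℕ → ℕ) (htop : Tendsto ℓ atTop atTop)
    (hmono : ∃ N, ∀ r n, N ≤ r → r ≤ n → ℓ r ≤ ℓ n)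
    (hlip : ∀ ε : ℝ, 0 < ε → ∃ N, ∀ r n : ℕ, N ≤ r → r ≤ n →
      (ℓ n : ℝ) - ℓ r ≤ ε * ((n : ℝ) - r) + 1) :
    Tendsto (totalWeight ℓ) atTop (𝓝 1) := by
  rw [Metric.tendsto_atTop']
  intro δ hδ
  obtain ⟨ε, hε, hε2, hεδ⟩ : ∃ ε : ℝ, 0 < ε ∧ ε ≤ 1 / 2 ∧ 4 * ε < δ :=
    ⟨min (1 / 2) (δ / 8), by positivity, min_le_left _ _, by
      linarith [min_le_right (1 / 2) (δ / 8)]⟩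
  obtain ⟨N₁, hN₁⟩ := hmono
  obtain ⟨N₂, hN₂⟩ := hlip ε hε
  set N := max (max N₁ N₂) 1 with hN
  have hN1 : N₁ ≤ N := (le_max_left _ _).trans (le_max_left _ _)
  have hN2 : N₂ ≤ N := (le_max_right _ _).trans (le_max_left _ _)
  have hNpos : 1 ≤ N := le_max_right _ _
  set B := ∑ r ∈ Finset.Icc 1 N, (r + ℓ r) with hB
  have hBr : ∀ r, 1 ≤ r → r ≤ N → r + ℓ r ≤ B := fun r h1 h2 =>
    Finset.single_le_sum (f := fun r => r + ℓ r) (fun _ _ => Nat.zero_le _)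
      (Finset.mem_Icc.2 ⟨h1, h2⟩)
  obtain ⟨N₃, hN₃⟩ := eventually_atTop.1 (htop.eventually_ge_atTop ⌈2 / ε⌉₊)
  refine ⟨max B N₃, fun n hn => ?_⟩
  have hnB : B < n := (le_max_left _ _).trans_lt hn
  have hNn : N ≤ n := by have := hBr N hNpos le_rfl; omega
  set M := ℓ n with hM
  have hMε : 2 / ε ≤ (M : ℝ) :=
    (Nat.le_ceil _).trans (by exact_mod_cast hN₃ n ((le_max_right _ _).trans hn.le))
  have hMε' : 2 ≤ ε * M := by rw [div_le_iff₀ hε] at hMε; linarith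
  have hM4 : (4 : ℝ) ≤ M := by nlinarith
  -- Windows starting before `N` end before `n`.
  have hsmall : ∀ r, 1 ≤ r → n ≤ r + ℓ r → N < r := by
    intro r h1 h2
    by_contra h
    have := hBr r h1 (not_lt.1 h)
    omega
  have hupper : totalWeight ℓ n ≤ (M + 1) * (M * (1 - ε))⁻¹ := by
    have hpos : (0 : ℝ) < M * (1 - ε) := by apply mul_pos <;> linarith
    calc totalWeight ℓ n ≤ ∑ r ∈ Finset.Icc 1 n,
          if n - M ≤ r then ((M : ℝ) * (1 - ε))⁻¹ else 0 := by
          refine Finset.sum_le_sum fun r hr => ?_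
          obtain ⟨hr1, hrn⟩ := Finset.mem_Icc.1 hr
          unfold windowWeight
          split_ifs with h h' h'
          · have hNr := hsmall r hr1 h.2
            have hl := hN₂ r n (by omega) hrn
            have hm := hN₁ r n (by omega) hrn
            have hnr : (n : ℝ) - r ≤ M := by
              have : n ≤ r + M := by omega
              have : (n : ℝ) ≤ r + M := by exact_mod_cast this
              linarith
            refine inv_anti₀ hpos ?_
            have := mul_le_mul_of_nonneg_left hnr hε.le
            linarith
          · exfalso
            have hNr := hsmall r hr1 h.2
            have hm := hN₁ r n (by omega) hrn
            omega
          · exact (inv_pos.2 hpos).le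
          · exact le_rfl
      _ ≤ (M + 1) * (M * (1 - ε))⁻¹ := by
          rw [← Finset.sum_filter, Finset.sum_const, nsmul_eq_mul]
          refine mul_le_mul_of_nonneg_right ?_ (inv_pos.2 hpos).le
          have : (Finset.Icc 1 n).filter (fun r => n - M ≤ r) ⊆ Finset.Icc (n - M) n := by
            intro r hr
            simp only [Finset.mem_filter, Finset.mem_Icc] at hr ⊢
            omega
          have := Finset.card_le_card this
          rw [Nat.card_Icc] at this
          have : ((Finset.Icc 1 n).filter (fun r => n - M ≤ r)).card ≤ M + 1 := by omega
          exact_mod_cast this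
  have hlower : ((M : ℝ) - 1) / (1 + ε) * ((M : ℝ) + 1)⁻¹ ≤ totalWeight ℓ n := by
    set K := ⌊((M : ℝ) - 1) / (1 + ε)⌋₊ with hK
    have hKle : (K : ℝ) * (1 + ε) ≤ M - 1 := by
      rw [← le_div_iff₀ (by linarith)]
      exact Nat.floor_le (div_nonneg (by linarith) (by linarith))
    -- The window starting at `N` already misses `n`, which forces `n - N` to exceed `K`.
    have hKN : N + K ≤ n := by
      have h1 := hBr N hNpos le_rfl
      have h2 := hN₂ N n hN2 hNn
      have h3 : N + ℓ N < n := by omega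
      have h3' : (N : ℝ) + ℓ N < n := by exact_mod_cast h3
      have h4 : (K : ℝ) * (1 + ε) ≤ ((n : ℝ) - N) * (1 + ε) := by linarith
      have h5 := le_of_mul_le_mul_right h4 (by linarith)
      have : (N : ℝ) + K ≤ n := by linarith
      exact_mod_cast this
    calc ((M : ℝ) - 1) / (1 + ε) * ((M : ℝ) + 1)⁻¹
        ≤ ((K : ℝ) + 1) * ((M : ℝ) + 1)⁻¹ :=
          mul_le_mul_of_nonneg_right (Nat.lt_floor_add_one _).le (by positivity)
      _ = ∑ r ∈ Finset.Icc (n - K) n, ((M : ℝ) + 1)⁻¹ := by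
          rw [Finset.sum_const, Nat.card_Icc, nsmul_eq_mul]
          have : n + 1 - (n - K) = K + 1 := by omega
          rw [this]
          push_cast
          rfl
      _ ≤ ∑ r ∈ Finset.Icc (n - K) n, windowWeight ℓ r n := by
          refine Finset.sum_le_sum fun r hr => ?_
          obtain ⟨hr1, hrn⟩ := Finset.mem_Icc.1 hr
          have hl := hN₂ r n (by omega) hrn
          have hm := hN₁ r n (by omega) hrn
          have hnr : (n : ℝ) - r ≤ K := by
            have : n ≤ r + K := by omega
            have : (n : ℝ) ≤ r + K := by exact_mod_cast this
            linarith
          have hin : (n : ℝ) ≤ r + ℓ r := by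
            have := mul_le_mul_of_nonneg_left hnr hε.le
            linarith
          rw [windowWeight, if_pos ⟨hrn, by exact_mod_cast hin⟩]
          refine inv_anti₀ (by positivity) ?_
          have : (ℓ r : ℝ) ≤ M := by exact_mod_cast hm
          linarith
      _ ≤ totalWeight ℓ n := by
          refine Finset.sum_le_sum_of_subset_of_nonneg
            (Finset.Icc_subset_Icc (by omega) le_rfl) fun r _ _ => windowWeight_nonneg ℓ r n
  have hu : ((M : ℝ) + 1) * (M * (1 - ε))⁻¹ ≤ 1 + 4 * ε := by
    have hpos : (0 : ℝ) < M * (1 - ε) := by apply mul_pos <;> linarith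
    rw [← div_eq_mul_inv, div_le_iff₀ hpos]
    nlinarith [mul_nonneg (mul_nonneg hε.le (by linarith : (0 : ℝ) ≤ M))
      (by linarith : (0 : ℝ) ≤ 1 / 2 - ε)]
  have hl : 1 - 2 * ε ≤ ((M : ℝ) - 1) / (1 + ε) * ((M : ℝ) + 1)⁻¹ := by
    rw [← div_eq_mul_inv, div_div, le_div_iff₀ (by positivity)]
    nlinarith [mul_nonneg (mul_nonneg hε.le hε.le) (by linarith : (0 : ℝ) ≤ M)]
  rw [Real.dist_eq, abs_lt]
  constructor <;> linarith

/-! ### Comparison of the averages -/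

lemma sum_range_shift (R : ℕ) (f : ℕ → ℝ) :
    ∑ i ∈ Finset.range R, f (i + 1) = ∑ n ∈ Finset.Icc 1 R, f n := by
  rw [Finset.range_eq_Ico, Finset.sum_Ico_add' f 0 R 1]
  rfl

/-- Let `(A_{R,n})` be a 1-bounded two-parameter sequence in a normed space
and let `L` be an eventually positive Hardy field function with `1 ≺ L(t) ≺ t`. If
`limsup_R (1/R)∑_{r=1}^R ‖(1/(⌊L(r)⌋+1)) ∑_{n=r}^{r+⌊L(r)⌋} A_{R,n}‖^d ≤ C`, then
`limsup_R ‖(1/R)∑_{n=1}^R A_{R,n}‖ ≤ C^{1/d}`. -/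
theorem statement11 (d : ℕ) (hd : 0 < d)
    (E : Type*) [NormedAddCommGroup E] [NormedSpace ℝ E]
    (A : ℕ → ℕ → E) (hA : ∀ R n, ‖A R n‖ ≤ 1)
    (H : HardyField) (L : ℝ → ℝ) (hL : L ∈ H.carrier)
    (hLpos : ∀ᶠ t in atTop, 0 < L t)
    (hL1 : Tendsto L atTop atTop)
    (hLt : Tendsto (fun t => L t / t) atTop (𝓝 0))
    (C : ℝ) (hC : 0 < C)
    (hyp : limsup (fun R : ℕ =>
        (R : ℝ)⁻¹ * ∑ r ∈ Finset.Icc 1 R,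
          ‖((⌊L (r : ℝ)⌋.toNat : ℝ) + 1)⁻¹ •
            ∑ n ∈ Finset.Icc r (r + ⌊L (r : ℝ)⌋.toNat), A R n‖ ^ d) atTop ≤ C) :
    limsup (fun R : ℕ =>
        ‖(R : ℝ)⁻¹ • ∑ n ∈ Finset.Icc 1 R, A R n‖) atTop ≤ C ^ ((d : ℝ)⁻¹) := by
  set ℓ : ℕ → ℕ := fun r => ⌊L (r : ℝ)⌋.toNat with hℓ
  have hfloor : ∀ r, ℓ r = ⌊L (r : ℝ)⌋₊ := fun r => Int.floor_toNat _
  have hcast : Tendsto (fun r : ℕ => (r : ℝ)) atTop atTop := tendsto_natCast_atTop_atTop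
  have htop : Tendsto ℓ atTop atTop := by
    rw [show ℓ = fun r : ℕ => ⌊L (r : ℝ)⌋₊ from funext hfloor]
    exact tendsto_nat_floor_atTop.comp (hL1.comp hcast)
  have hmono : ∃ N, ∀ r n, N ≤ r → r ≤ n → ℓ r ≤ ℓ n := by
    obtain ⟨a, ha⟩ := H.monotoneOn_of_tendsto hL hL1
    refine ⟨⌈a⌉₊, fun r n hr hrn => ?_⟩
    have har : a ≤ r := Nat.ceil_le.1 hr
    have hrn' : (r : ℝ) ≤ n := by exact_mod_cast hrn
    rw [hfloor, hfloor]
    exact Nat.floor_mono (ha (Set.mem_Ici.2 har) (Set.mem_Ici.2 (har.trans hrn')) hrn')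
  have hlip : ∀ ε : ℝ, 0 < ε → ∃ N, ∀ r n : ℕ, N ≤ r → r ≤ n →
      (ℓ n : ℝ) - ℓ r ≤ ε * ((n : ℝ) - r) + 1 := by
    intro ε hε
    obtain ⟨a, ha⟩ := H.sub_le_of_sublinear hL hLt hε
    obtain ⟨b, hb⟩ := eventually_atTop.1 hLpos
    refine ⟨⌈max a b⌉₊, fun r n hr hrn => ?_⟩
    have hr' : max a b ≤ r := Nat.ceil_le.1 hr
    have hrn' : (r : ℝ) ≤ n := by exact_mod_cast hrn
    have h1 := ha r n ((le_max_left _ _).trans hr') hrn'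
    have h2 := hb n (((le_max_right _ _).trans hr').trans hrn')
    have h3 := Nat.floor_le h2.le
    have h4 := Nat.lt_floor_add_one (L r)
    rw [hfloor, hfloor]
    linarith
  have hw := tendsto_totalWeight ℓ htop hmono hlip
  -- The error term of the smoothing step, which vanishes by Cesàro summation.
  set e : ℕ → ℝ := fun R => (R : ℝ)⁻¹ * (2 * ∑ n ∈ Finset.Icc 1 R, |totalWeight ℓ n - 1|) with he
  have he0 : Tendsto e atTop (𝓝 0) := by
    have h1 : Tendsto (fun n => |totalWeight ℓ (n + 1) - 1|) atTop (𝓝 0) := by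
      have h := ((hw.comp (tendsto_add_atTop_nat 1)).sub_const 1).abs
      simpa [Function.comp_def] using h
    have h2 := h1.cesaro.const_mul 2
    rw [mul_zero] at h2
    refine h2.congr fun R => ?_
    simp only [he]
    rw [← sum_range_shift R (fun n => |totalWeight ℓ n - 1|)]
    ring
  set Y : ℕ → ℝ := fun R => (R : ℝ)⁻¹ * ∑ r ∈ Finset.Icc 1 R,
    ‖((ℓ r : ℝ) + 1)⁻¹ • ∑ n ∈ Finset.Icc r (r + ℓ r), A R n‖ ^ d with hY
  have hYnn : ∀ R, 0 ≤ Y R := fun R => by positivity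
  have hd' : (0 : ℝ) < (d : ℝ)⁻¹ := by positivity
  have havg : ∀ R r, ‖((ℓ r : ℝ) + 1)⁻¹ • ∑ n ∈ Finset.Icc r (r + ℓ r), A R n‖ ≤ 1 := by
    intro R r
    have h1 : ‖∑ n ∈ Finset.Icc r (r + ℓ r), A R n‖ ≤ (ℓ r : ℝ) + 1 := by
      refine (norm_sum_le_of_le _ fun n _ => hA R n).trans ?_
      have e : r + ℓ r + 1 - r = ℓ r + 1 := by omega
      simp [e]
    rw [norm_smul, norm_inv, Real.norm_of_nonneg (by positivity), inv_mul_le_iff₀ (by positivity)]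
    linarith
  have hYle : ∀ R, Y R ≤ 1 := by
    intro R
    rcases Nat.eq_zero_or_pos R with rfl | hR
    · simp [hY]
    · have hR' : (0 : ℝ) < R := by exact_mod_cast hR
      simp only [hY]
      rw [inv_mul_le_iff₀ hR', mul_one]
      refine (Finset.sum_le_sum fun r _ => pow_le_one₀ (norm_nonneg _) (havg R r)).trans ?_
      simp
  have hkey : ∀ R : ℕ, 0 < R →
      ‖(R : ℝ)⁻¹ • ∑ n ∈ Finset.Icc 1 R, A R n‖ ≤ Y R ^ ((d : ℝ)⁻¹) + e R := by
    intro R hR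
    have hR' : (0 : ℝ) < R := by exact_mod_cast hR
    have h1 := norm_sum_avg_sub_sum_le ℓ (A R) (hA R) R
    set S := ∑ r ∈ Finset.Icc 1 R, ((ℓ r : ℝ) + 1)⁻¹ • ∑ n ∈ Finset.Icc r (r + ℓ r), A R n
    have h2 : ‖∑ n ∈ Finset.Icc 1 R, A R n‖ ≤ ‖S‖
        + 2 * ∑ n ∈ Finset.Icc 1 R, |totalWeight ℓ n - 1| := by
      have := norm_sub_norm_le (∑ n ∈ Finset.Icc 1 R, A R n) S
      rw [norm_sub_rev] at this
      linarith
    -- Power mean inequality with the uniform weights `1 / R`.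
    have h3 : (∑ r ∈ Finset.Icc 1 R, (R : ℝ)⁻¹ *
        ‖((ℓ r : ℝ) + 1)⁻¹ • ∑ n ∈ Finset.Icc r (r + ℓ r), A R n‖) ^ d ≤ Y R := by
      have := Real.pow_arith_mean_le_arith_mean_pow (Finset.Icc 1 R) (fun _ => (R : ℝ)⁻¹)
        (fun r => ‖((ℓ r : ℝ) + 1)⁻¹ • ∑ n ∈ Finset.Icc r (r + ℓ r), A R n‖)
        (fun _ _ => by positivity) (by simp [hR'.ne']) (fun _ _ => norm_nonneg _) d
      simpa only [hY, Finset.mul_sum] using this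
    rw [← Finset.mul_sum] at h3
    have h4 : (R : ℝ)⁻¹ * ‖S‖ ≤ Y R ^ ((d : ℝ)⁻¹) := by
      have h5 : (R : ℝ)⁻¹ * ‖S‖ ≤ (R : ℝ)⁻¹ * ∑ r ∈ Finset.Icc 1 R,
          ‖((ℓ r : ℝ) + 1)⁻¹ • ∑ n ∈ Finset.Icc r (r + ℓ r), A R n‖ :=
        mul_le_mul_of_nonneg_left (norm_sum_le _ _) (by positivity)
      refine h5.trans ?_
      have h6 := Real.rpow_le_rpow (by positivity) h3 hd'.le
      rwa [Real.pow_rpow_inv_natCast (by positivity) hd.ne'] at h6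
    rw [norm_smul, norm_inv, Real.norm_of_nonneg hR'.le]
    have h7 := mul_le_mul_of_nonneg_left h2 (inv_pos.2 hR').le
    rw [mul_add] at h7
    exact h7.trans (add_le_add h4 le_rfl)
  have hbound : ∀ δ : ℝ, 0 < δ → limsup (fun R : ℕ =>
      ‖(R : ℝ)⁻¹ • ∑ n ∈ Finset.Icc 1 R, A R n‖) atTop ≤ (C + δ) ^ ((d : ℝ)⁻¹) + δ := by
    intro δ hδ
    have hYlt : ∀ᶠ R in atTop, Y R < C + δ :=
      eventually_lt_of_limsup_lt (lt_of_le_of_lt hyp (by linarith))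
        (isBoundedUnder_of ⟨1, hYle⟩)
    refine limsup_le_of_le ?_ ?_
    · exact (isBoundedUnder_of ⟨0, fun R => norm_nonneg _⟩ :
        IsBoundedUnder (· ≥ ·) atTop _).isCoboundedUnder_le
    · filter_upwards [hYlt, he0.eventually_lt_const hδ, eventually_gt_atTop 0] with R h1 h2 h3
      exact (hkey R h3).trans
        (add_le_add (Real.rpow_le_rpow (hYnn R) h1.le hd'.le) h2.le)
  have hlim : Tendsto (fun δ : ℝ => (C + δ) ^ ((d : ℝ)⁻¹) + δ) (𝓝[>] 0)
      (𝓝 (C ^ ((d : ℝ)⁻¹))) := by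
    have hc : ContinuousAt (fun δ : ℝ => (C + δ) ^ ((d : ℝ)⁻¹) + δ) 0 := by
      refine ContinuousAt.add ?_ continuousAt_id
      exact (continuousAt_const.add continuousAt_id).rpow_const (Or.inr hd'.le)
    have := hc.tendsto
    simp only [add_zero] at this
    exact this.mono_left nhdsWithin_le_nhds
  exact ge_of_tendsto hlim (eventually_mem_nhdsWithin.mono fun δ hδ => hbound δ hδ)
end
end

section
/- Let t and d be positive integers and let p be a nonzero real polynomial in t variables of total degree d. Then there is a constant C depending only on d and t such that for every positive integer M, the number of integer points m ∈ ℤ^t ∩ [−M,M]^t with p(m) = 0 is at most C·M^{t−1}. -/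
/-!
The bound is the Schwartz–Zippel lemma applied to the set `S` of integers in `[-M, M]`, viewed
inside `ℝ`: a nonzero `p` of total degree `d` has at most `d * #S ^ (t - 1)` zeros in `S ^ t`.
Since `#S = 2 * M + 1 ≤ 3 * M` for `M ≥ 1`, the constant `C = d * 3 ^ (t - 1)` works.
-/

open Filter Topology

noncomputable section

open scoped Classical in
/-- Schwartz–Zippel without denominators. -/
lemma card_zeros_le {n : ℕ} {p : MvPolynomial (Fin (n + 1)) ℝ} (hp : p ≠ 0) (S : Finset ℝ)
    (hS : S.Nonempty) :
    ((Fintype.piFinset fun _ : Fin (n + 1) => S).filter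
      fun x => MvPolynomial.eval x p = 0).card ≤ p.totalDegree * S.card ^ n := by
  have h := MvPolynomial.schwartz_zippel_totalDegree hp S
  have hpos : (0 : ℚ≥0) < S.card := by exact_mod_cast hS.card_pos
  rw [div_le_div_iff₀ (by positivity) hpos, pow_succ, ← mul_assoc] at h
  have h' := le_of_mul_le_mul_right h hpos
  convert (by exact_mod_cast h' : _ ≤ p.totalDegree * S.card ^ n)

open scoped Classical in
/-- A nonzero real polynomial in `t` variables of total degree `d` has at
most `C(d,t) · M^{t-1}` integer zeros in the cube `[−M,M]^t`. -/
theorem statement14 (t d : ℕ) (ht : 0 < t) :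
    ∃ C : ℝ, ∀ p : MvPolynomial (Fin t) ℝ, p ≠ 0 → p.totalDegree = d →
      ∀ M : ℕ, 0 < M →
        (((Fintype.piFinset fun _ : Fin t => Finset.Icc (-(M : ℤ)) M).filter
            fun m => MvPolynomial.eval (fun v => (m v : ℝ)) p = 0).card : ℝ) ≤
          C * (M : ℝ) ^ (t - 1) := by
  obtain ⟨n, rfl⟩ : ∃ n, t = n + 1 := ⟨t - 1, by omega⟩
  refine ⟨d * 3 ^ n, fun p hp hd M hM => ?_⟩
  set S : Finset ℝ := (Finset.Icc (-(M : ℤ)) M).image (fun k : ℤ => (k : ℝ)) with hSdef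
  have hcard : S.card = 2 * M + 1 := by
    rw [hSdef, Finset.card_image_of_injective _ Int.cast_injective, Int.card_Icc]
    omega
  have hne : S.Nonempty := Finset.card_pos.1 (by omega)
  have hle : ((Fintype.piFinset fun _ : Fin (n + 1) => Finset.Icc (-(M : ℤ)) M).filter
      fun m => MvPolynomial.eval (fun v => (m v : ℝ)) p = 0).card ≤
      ((Fintype.piFinset fun _ : Fin (n + 1) => S).filter
        fun x => MvPolynomial.eval x p = 0).card := by
    refine Finset.card_le_card_of_injOn (fun m v => (m v : ℝ)) ?_ ?_
    · intro m hm
      have hm' := Finset.mem_filter.1 (Finset.mem_coe.1 hm)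
      exact Finset.mem_coe.2 (Finset.mem_filter.2 ⟨Fintype.mem_piFinset.2 fun v =>
        Finset.mem_image_of_mem _ (Fintype.mem_piFinset.1 hm'.1 v), hm'.2⟩)
    · intro a _ b _ hab
      funext v
      exact Int.cast_injective (congrFun hab v)
  have hN := calc
    _ ≤ _ := hle
    _ ≤ d * (2 * M + 1) ^ n := by simpa [hd, hcard] using card_zeros_le hp S hne
    _ ≤ d * (3 * M) ^ n := by gcongr; omega
    _ = d * 3 ^ n * M ^ n := by rw [mul_pow, mul_assoc]
  rw [Nat.add_sub_cancel]
  exact_mod_cast hN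
end
end

section
/- Let a_1,…,a_k be nonzero functions in H with a_1 ≪ a_2 ≪ ⋯ ≪ a_k, and let p_1,…,p_k be nonzero, linearly independent real polynomials in t variables. Then the set of m ∈ ℤ^t for which the function p_1(m)a_1 + ⋯ + p_k(m)a_k does NOT have the same growth rate as a_k has density zero in ℤ^t; that is, for all m ∈ ℤ^t outside a set Λ with |Λ ∩ [−M,M]^t|/(2M+1)^t → 0 as M → ∞, the ratio (p_1(m)a_1(t) + ⋯ + p_k(m)a_k(t))/a_k(t) converges to a finite nonzero limit as t → +∞. -/
/-!
A function `f` of the Hardy field has an eventually continuous derivative which again lies in the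
field, hence is eventually identically zero or, being invertible, eventually nonvanishing. So `f`
is eventually monotone, and it converges to a finite limit as soon as it is eventually bounded
(`HardyField.exists_tendsto_of_bounded`).

Applied to the bounded quotients `a_i / a_k`, this gives limits `c_i`, with `c_k = 1`, and for
every `m` the quotient in question converges to `P(m)`, where `P = ∑ c_i p_i`. Linear independence
and `c_k = 1` show `P ≠ 0`. By the Schwartz–Zippel lemma the integer zeros of `P` have density
zero (`densityZero_zeros`), and they are the exceptional set.
-/

open Filter MeasureTheory Topology

noncomputable section

open scoped Classical in
/-- A set of integer lattice points `Λ ⊆ ℤ^t` has density zero. -/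
def DensityZero {t : ℕ} (Λ : Set (Fin t → ℤ)) : Prop :=
  Tendsto (fun M : ℕ =>
      (((Fintype.piFinset fun _ : Fin t => Finset.Icc (-(M : ℤ)) M).filter
          fun m => m ∈ Λ).card : ℝ) / (2 * M + 1 : ℝ) ^ t)
    atTop (𝓝 0)

/-- A function monotone near `+∞` and eventually bounded above has a finite limit. -/
theorem exists_tendsto_of_monotoneOn {f : ℝ → ℝ} {b C : ℝ} (hf : MonotoneOn f (Set.Ioi b))
    (hC : ∀ᶠ x in atTop, f x ≤ C) : ∃ c, Tendsto f atTop (𝓝 c) := by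
  -- Truncating the argument makes `f` globally monotone without changing its germ.
  have hmono : Monotone fun x => f (max x (b + 1)) := fun x y hxy =>
    hf (by simp) (by simp) (max_le_max_right _ hxy)
  have heq : (fun x => f (max x (b + 1))) =ᶠ[atTop] f := by
    filter_upwards [eventually_ge_atTop (b + 1)] with x hx
    rw [max_eq_left hx]
  rcases tendsto_atTop_of_monotone hmono with h | ⟨c, h⟩
  · obtain ⟨x, hx, hx'⟩ := (hC.and ((h.congr' heq).eventually_gt_atTop C)).exists
    exact absurd hx' (not_lt.mpr hx)
  · exact ⟨c, h.congr' heq⟩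

namespace HardyField

/-- Germs in a Hardy field have an eventual sign: a nonzero one is invertible, hence eventually
nonvanishing, and the intermediate value theorem applies. -/
theorem eventually_sign (H : HardyField) {f : ℝ → ℝ} (hf : f ∈ H.carrier) :
    ∃ b, (∀ x > b, 0 ≤ f x) ∨ ∀ x > b, f x ≤ 0 := by
  by_cases h0 : f =ᶠ[atTop] (0 : ℝ → ℝ)
  · obtain ⟨b, hb⟩ := eventually_atTop.mp h0
    exact ⟨b, Or.inl fun x hx => (hb x (le_of_lt hx)).ge⟩
  · obtain ⟨g, -, hg⟩ := H.inv_mem hf h0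
    obtain ⟨b, hb⟩ := eventually_atTop.mp hg
    obtain ⟨a, ha⟩ := H.smooth f hf
    have hcont : ContinuousOn f (Set.Ioi (max a b)) :=
      ha.continuousOn.mono (Set.Ioi_subset_Ioi (le_max_left _ _))
    have hnz : ∀ x ∈ Set.Ioi (max a b), f x ≠ 0 := by
      intro x hx hfx
      have := hb x ((le_max_right a b).trans (le_of_lt hx))
      simp [hfx] at this
    refine ⟨max a b, ?_⟩
    by_contra! hcon
    obtain ⟨⟨x, hx, hfx⟩, y, hy, hfy⟩ := hcon
    obtain ⟨z, hz, hfz⟩ := isPreconnected_Ioi.intermediate_value hx hy hcont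
      ⟨hfx.le, hfy.le⟩
    exact hnz z hz hfz

theorem exists_tendsto_of_bounded (H : HardyField) {f : ℝ → ℝ} (hf : f ∈ H.carrier) {C : ℝ}
    (hC : ∀ᶠ x in atTop, |f x| ≤ C) : ∃ c, Tendsto f atTop (𝓝 c) := by
  obtain ⟨a, ha⟩ := H.smooth f hf
  obtain ⟨b, hb⟩ := H.eventually_sign (H.deriv_mem hf)
  have hdiff : DifferentiableOn ℝ f (Set.Ioi (max a b)) :=
    (ha.differentiableOn (by simp)).mono (Set.Ioi_subset_Ioi (le_max_left _ _))
  have hlt : ∀ x ∈ Set.Ioi (max a b), b < x := fun x hx => (le_max_right a b).trans_lt hx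
  rcases hb with hb | hb
  · refine exists_tendsto_of_monotoneOn (b := max a b) (C := C) ?_
      (hC.mono fun x hx => (le_abs_self _).trans hx)
    refine monotoneOn_of_deriv_nonneg (convex_Ioi _) hdiff.continuousOn ?_ ?_
    · simpa using hdiff
    · rw [interior_Ioi]
      exact fun x hx => hb x (hlt x hx)
  · have hanti : AntitoneOn f (Set.Ioi (max a b)) := by
      refine antitoneOn_of_deriv_nonpos (convex_Ioi _) hdiff.continuousOn ?_ ?_
      · simpa using hdiff
      · rw [interior_Ioi]
        exact fun x hx => hb x (hlt x hx)
    obtain ⟨c, hc⟩ := exists_tendsto_of_monotoneOn (f := fun x => -f x) (C := C) hanti.neg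
      (hC.mono fun x hx => (neg_le_abs _).trans hx)
    exact ⟨-c, by simpa using hc.neg⟩

/-- If `f = O(g)` in a Hardy field and `g` is not the zero germ, then `f / g` has a finite
limit. -/
theorem exists_tendsto_div (H : HardyField) {f g : ℝ → ℝ} (hf : f ∈ H.carrier)
    (hg : g ∈ H.carrier) (hg0 : ¬ g =ᶠ[atTop] (0 : ℝ → ℝ)) (hfg : f =O[atTop] g) :
    ∃ c, Tendsto (fun x => f x / g x) atTop (𝓝 c) := by
  obtain ⟨h, hh, hgh⟩ := H.inv_mem hg hg0
  have hdiv : f * h =ᶠ[atTop] fun x => f x / g x := by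
    filter_upwards [hgh] with x hx
    have hinv : h x = (g x)⁻¹ := eq_inv_of_mul_eq_one_right hx
    rw [Pi.mul_apply, div_eq_mul_inv, hinv]
  obtain ⟨C, hC⟩ := hfg.bound
  refine H.exists_tendsto_of_bounded (H.mem_congr (H.mul_mem hf hh) hdiv) (C := C) ?_
  filter_upwards [hC, hgh] with x hx hx'
  have hgx : g x ≠ 0 := by
    intro h0
    simp [h0] at hx'
  rw [abs_div, div_le_iff₀ (abs_pos.mpr hgx)]
  simpa using hx

end HardyField

/-- By Schwartz–Zippel, at most a fraction `deg P / (2M + 1)` of the points of the box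
`[-M, M]^t` are zeros of `P`. -/
theorem densityZero_zeros {t : ℕ} {P : MvPolynomial (Fin t) ℝ} (hP : P ≠ 0) :
    DensityZero {m : Fin t → ℤ | MvPolynomial.eval (fun v => (m v : ℝ)) P = 0} := by
  classical
  have hlim : Tendsto (fun M : ℕ => (P.totalDegree : ℝ) / (2 * M + 1 : ℝ)) atTop (𝓝 0) := by
    refine tendsto_const_nhds.div_atTop (tendsto_atTop_add_const_right _ _ ?_)
    exact tendsto_natCast_atTop_atTop.const_mul_atTop (by norm_num)
  refine squeeze_zero (fun M => by positivity) (fun M => ?_) hlim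
  have hcard : ((Finset.Icc (-(M : ℤ)) M).image (Int.cast : ℤ → ℝ)).card = 2 * M + 1 := by
    rw [Finset.card_image_of_injective _ Int.cast_injective, Int.card_Icc]
    omega
  have hSZ := MvPolynomial.schwartz_zippel_totalDegree hP
    ((Finset.Icc (-(M : ℤ)) M).image (Int.cast : ℤ → ℝ))
  rw [hcard] at hSZ
  have hSZ' := (NNRat.cast_le (K := ℝ)).mpr hSZ
  push_cast at hSZ'
  refine le_trans ?_ hSZ'
  gcongr
  refine Finset.card_le_card_of_injOn (fun m v => (m v : ℝ)) ?_ ?_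
  · intro m hm
    simpa [Fintype.mem_piFinset] using hm
  · intro m _ m' _ h
    funext v
    exact Int.cast_injective (congrFun h v)

/-- If `a_0 ≪ a_1 ≪ ⋯ ≪ a_k` are nonzero Hardy field functions and
`p_0, …, p_k` are nonzero linearly independent real polynomials in `t` variables, then for
all `m ∈ ℤ^t` outside a set of density zero, `p_0(m)a_0 + ⋯ + p_k(m)a_k` has the same growth
rate as `a_k`: their ratio converges to a finite nonzero limit. -/
theorem statement15 (H : HardyField) (k t : ℕ)
    (a : Fin (k + 1) → ℝ → ℝ) (haH : ∀ i, a i ∈ H.carrier)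
    (hne : ∀ i, ¬ a i =ᶠ[atTop] (0 : ℝ → ℝ))
    (hord : ∀ i j : Fin (k + 1), i ≤ j → (a i) =O[atTop] (a j))
    (p : Fin (k + 1) → MvPolynomial (Fin t) ℝ)
    (hp : ∀ i, p i ≠ 0) (hli : LinearIndependent ℝ p) :
    ∃ Λ : Set (Fin t → ℤ), DensityZero Λ ∧
      ∀ m : Fin t → ℤ, m ∉ Λ →
        ∃ c : ℝ, c ≠ 0 ∧
          Tendsto (fun x : ℝ =>
              (∑ i, MvPolynomial.eval (fun v => (m v : ℝ)) (p i) * a i x) /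
                a (Fin.last k) x)
            atTop (𝓝 c) := by
  choose c hc using fun i => H.exists_tendsto_div (haH i) (haH (Fin.last k)) (hne _)
    (hord i _ (Fin.le_last i))
  have hclast : c (Fin.last k) = 1 := by
    refine tendsto_nhds_unique (hc (Fin.last k)) (tendsto_const_nhds.congr' ?_)
    obtain ⟨g, -, hg⟩ := H.inv_mem (haH (Fin.last k)) (hne _)
    filter_upwards [hg] with x hx
    refine (div_self fun h0 => ?_).symm
    simp [h0] at hx
  have hP : ∑ i, c i • p i ≠ 0 := by
    intro h0
    have := Fintype.linearIndependent_iff.mp hli c h0 (Fin.last k)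
    rw [hclast] at this
    exact one_ne_zero this
  refine ⟨_, densityZero_zeros hP, fun m hm => ⟨_, hm, ?_⟩⟩
  have hsum := tendsto_finsetSum Finset.univ fun i _ =>
    (hc i).const_mul (MvPolynomial.eval (fun v => (m v : ℝ)) (p i))
  have hval : MvPolynomial.eval (fun v => (m v : ℝ)) (∑ i, c i • p i) =
      ∑ i, MvPolynomial.eval (fun v => (m v : ℝ)) (p i) * c i := by
    simp [map_sum, MvPolynomial.smul_eval, mul_comm]
  rw [hval]
  refine hsum.congr fun x => ?_
  simp only [Finset.sum_div, mul_div_assoc]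
end
end

section
/- Let f ∈ H be strongly non-polynomial with t^δ ≪ f(t) for some δ > 0. Then: (i) for all sufficiently large k, the class S(f,k) is non-empty; moreover, if 0 < δ < 1 and t^δ ≪ f(t), then |f^{(k+1)}(t)|^{−1/(k+1)} / |f^{(k)}(t)|^{−1/k} ≫ t^{δ/(k(k+1))}; (ii) for every 0 < c < 1 sufficiently close to 1 there exists k_0 ∈ ℕ such that the function t ↦ t^c belongs to S(f,k_0); (iii) for every sufficiently large k there exists c_1 ∈ (0,1) such that for all c ∈ (c_1,1), the function t ↦ t^c does not belong to S(f,k). -/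
/-!
Germs in a Hardy field have constant sign eventually, hence are eventually monotone and have limits
in `[-∞, ∞]`. In particular `t u'/u` has a limit for every nonzero germ `u`; if it is a real number
`β`, then `|u| = t^(β + o(1))` (`HardyField.tendsto_atTop_of_exponent`,
`HardyField.tendsto_zero_of_exponent`). For `f` as in the theorem the limit is a real `α > 0`
(`HardyField.exists_exponent`).

The crux is that `f^(k)` has exponent `α - k` for every `k` (`HardyField.iterate`). With `r = t u'/u`
one has `t u''/u' = t r'/r + r - 1`, so it suffices that `t r'/r → 0` (`HardyField.step`). If
`r → β ≠ 0` this holds because `t r'` must tend to `0`, otherwise `r` would diverge logarithmically.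
If `r → 0` and `t r'/r` had a nonzero limit, then `r` would be `O(t^(-ε))`, so `log |u|` would
converge and `u` would have a finite nonzero limit. That would make `f` asymptotic to a constant
times `t^α` with `α` an integer, contrary to strong non-polynomiality.

Hence the endpoints of `S(f,k)` are `t^(1 - α/k + o(1))` and `t^(1 - α/(k+1) + o(1))`. All
assertions about powers `t^c` follow, except for the critical exponents `c = 1 - α/k`, where the
existence of the limit of `t^(k-α) f^(k)` decides between `S(f,k)` and `S(f,k-1)`. For the gap
estimate, `t f^(k+1)/f^(k)` is bounded, so the ratio of endpoints dominates
`(t^k |f^(k)|)^(1/(k(k+1)))`; and `t^k |f^(k)| ≫ t^δ`, either because `δ < α`, or because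
`α = δ ∈ (0,1)` is not an integer and `t^k f^(k)` is asymptotic to a nonzero multiple of `f`.
-/


open Filter MeasureTheory Topology

noncomputable section

/-- The class `S(f,k)`: Hardy field functions `g` with
`|f^{(k)}(t)|^{-1/k} ⪯ g(t) ≺ |f^{(k+1)}(t)|^{-1/(k+1)}`, where `u ⪯ v` means that
`lim |v/u|` is nonzero (possibly infinite) and `u ≺ v` means `u/v → 0`. -/
def SClass (H : HardyField) (f : ℝ → ℝ) (k : ℕ) : Set (ℝ → ℝ) :=
  {g | g ∈ H.carrier ∧
    (Tendsto (fun t => |g t| * |iteratedDeriv k f t| ^ (k : ℝ)⁻¹) atTop atTop ∨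
      ∃ c : ℝ, 0 < c ∧
        Tendsto (fun t => |g t| * |iteratedDeriv k f t| ^ (k : ℝ)⁻¹) atTop (𝓝 c)) ∧
    Tendsto (fun t => g t * |iteratedDeriv (k + 1) f t| ^ ((k : ℝ) + 1)⁻¹) atTop (𝓝 0)}

/-! ### Monotonicity and growth from logarithmic derivatives -/

lemma ev_mono {w w' : ℝ → ℝ} (h : ∀ᶠ t in atTop, HasDerivAt w (w' t) t)
    (h' : ∀ᶠ t in atTop, 0 ≤ w' t) : ∃ a, ∀ x, a ≤ x → ∀ y, x ≤ y → w x ≤ w y := by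
  obtain ⟨a, ha⟩ := eventually_atTop.1 (h.and h')
  refine ⟨a, fun x hx y hxy => ?_⟩
  have := monotoneOn_of_deriv_nonneg (convex_Ici a) (f := w)
    (fun z hz => (ha z hz).1.continuousAt.continuousWithinAt)
    (fun z hz => (ha z (interior_subset hz)).1.differentiableAt.differentiableWithinAt)
    (fun z hz => by
      rw [(ha z (interior_subset hz)).1.deriv]
      exact (ha z (interior_subset hz)).2)
  exact this hx (hx.trans hxy) hxy

/-- A lower bound on the logarithmic derivative `t u'/u` integrates to a power lower bound on `|u|`,
because `log |u| - b log t` is eventually nondecreasing. -/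
lemma lower_growth {u u' : ℝ → ℝ} {b : ℝ} (hd : ∀ᶠ t in atTop, HasDerivAt u (u' t) t)
    (h0 : ∀ᶠ t in atTop, u t ≠ 0) (hb : ∀ᶠ t in atTop, b ≤ t * u' t / u t) :
    ∃ c, 0 < c ∧ ∀ᶠ t in atTop, c * t ^ b ≤ |u t| := by
  obtain ⟨a, ha⟩ := ev_mono (w := fun t => Real.log (u t) - b * Real.log t)
    (w' := fun t => u' t / u t - b * t⁻¹)
    (by
      filter_upwards [hd, h0, eventually_gt_atTop 0] with t h1 h2 h3
      exact (h1.log h2).sub ((Real.hasDerivAt_log h3.ne').const_mul b))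
    (by
      filter_upwards [hb, eventually_gt_atTop 0] with t h1 h3
      have : u' t / u t - b * t⁻¹ = (t * u' t / u t - b) * t⁻¹ := by field_simp
      rw [this]
      exact mul_nonneg (sub_nonneg.2 h1) (inv_nonneg.2 h3.le))
  refine ⟨Real.exp (Real.log (u a) - b * Real.log a), Real.exp_pos _, ?_⟩
  filter_upwards [eventually_ge_atTop a, h0, eventually_gt_atTop 0] with t h1 h2 h3
  rw [Real.rpow_def_of_pos h3, ← Real.exp_add, ← Real.exp_log_eq_abs h2]
  have := ha a le_rfl t h1
  exact Real.exp_le_exp.2 (by linarith)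

lemma upper_growth {u u' : ℝ → ℝ} {b : ℝ} (hd : ∀ᶠ t in atTop, HasDerivAt u (u' t) t)
    (h0 : ∀ᶠ t in atTop, u t ≠ 0) (hb : ∀ᶠ t in atTop, t * u' t / u t ≤ b) :
    ∃ C, 0 < C ∧ ∀ᶠ t in atTop, |u t| ≤ C * t ^ b := by
  obtain ⟨c, hc, h⟩ := lower_growth (u := fun t => (u t)⁻¹) (u' := fun t => - u' t / u t ^ 2)
    (b := -b)
    (by filter_upwards [hd, h0] with t h1 h2 using h1.inv h2)
    (by filter_upwards [h0] with t h2 using inv_ne_zero h2)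
    (by
      filter_upwards [hb, h0] with t h1 h2
      have : t * (- u' t / u t ^ 2) / (u t)⁻¹ = - (t * u' t / u t) := by field_simp
      rw [this]; linarith)
  refine ⟨c⁻¹, inv_pos.2 hc, ?_⟩
  filter_upwards [h, h0, eventually_gt_atTop 0] with t h1 h2 h3
  rw [abs_inv, Real.rpow_neg h3.le] at h1
  have h4 : 0 < t ^ b := Real.rpow_pos_of_pos h3 b
  have h5 : 0 < |u t| := abs_pos.2 h2
  rw [← div_eq_mul_inv, div_le_iff₀ h4, inv_mul_eq_div, le_div_iff₀ h5] at h1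
  rw [inv_mul_eq_div, le_div_iff₀ hc]; linarith

/-- Powers of different exponents are not comparable. -/
lemma rpow_lt_contra {a b c : ℝ} (hab : a < b) (hc : 0 < c)
    (h : ∀ᶠ t : ℝ in atTop, c * t ^ b ≤ t ^ a) : False := by
  have h1 : Tendsto (fun t : ℝ => c * t ^ (b - a)) atTop atTop :=
    (tendsto_rpow_atTop (sub_pos.2 hab)).const_mul_atTop hc
  obtain ⟨t, h2, h3, h4⟩ := (h.and ((h1.eventually_gt_atTop 1).and
    (eventually_gt_atTop 0))).exists
  rw [Real.rpow_sub h4, ← mul_div_assoc, lt_div_iff₀ (Real.rpow_pos_of_pos h4 a)] at h3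
  linarith

/-! ### Limits and exponents in a Hardy field -/

namespace HardyField
variable {H : HardyField}

lemma hasDeriv {f : ℝ → ℝ} (hf : f ∈ H.carrier) :
    ∀ᶠ t in atTop, HasDerivAt f (deriv f t) t := by
  obtain ⟨a, ha⟩ := H.smooth f hf
  filter_upwards [eventually_gt_atTop a] with t ht
  exact ((ha.differentiableOn (by simp)).differentiableAt (Ioi_mem_nhds ht)).hasDerivAt

lemma ne_zero {f : ℝ → ℝ} (hf : f ∈ H.carrier) (h : ¬ f =ᶠ[atTop] (0 : ℝ → ℝ)) :
    ∀ᶠ t in atTop, f t ≠ 0 := by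
  obtain ⟨g, -, hg⟩ := H.inv_mem hf h
  filter_upwards [hg] with t ht h0
  simp [h0] at ht

/-- A nonvanishing continuous function on a half-line has constant sign. -/
lemma sign {f : ℝ → ℝ} (hf : f ∈ H.carrier) :
    (∀ᶠ t in atTop, 0 ≤ f t) ∨ (∀ᶠ t in atTop, f t ≤ 0) := by
  by_cases h : f =ᶠ[atTop] (0 : ℝ → ℝ)
  · left; filter_upwards [h] with t ht; simp [ht]
  obtain ⟨a, ha⟩ := eventually_atTop.1 ((ne_zero hf h).and (hasDeriv hf))
  have hc : ContinuousOn f (Set.Ici a) := fun z hz => (ha z hz).2.continuousAt.continuousWithinAt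
  by_contra hcon
  push Not at hcon
  obtain ⟨h1, h2⟩ := hcon
  obtain ⟨x, hx, hx'⟩ := frequently_atTop.1 h1 a
  obtain ⟨y, hy, hy'⟩ := frequently_atTop.1 h2 a
  obtain ⟨z, hz, hz'⟩ := isPreconnected_Ici.intermediate_value (s := Set.Ici a) hx hy hc
    (show (0 : ℝ) ∈ Set.Icc (f x) (f y) from ⟨hx'.le, hy'.le⟩)
  exact (ha z hz).1 hz'

lemma limit_of_deriv_nonneg {f : ℝ → ℝ} (hf : f ∈ H.carrier) (h : ∀ᶠ t in atTop, 0 ≤ deriv f t) :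
    Tendsto f atTop atTop ∨ ∃ l, Tendsto f atTop (𝓝 l) := by
  obtain ⟨a, ha⟩ := ev_mono (hasDeriv hf) h
  have hm : Monotone fun t => f (max t a) := fun x y hxy =>
    ha _ (le_max_right _ _) _ (max_le_max_right _ hxy)
  have he : (fun t => f (max t a)) =ᶠ[atTop] f := by
    filter_upwards [eventually_ge_atTop a] with t ht; rw [max_eq_left ht]
  rcases tendsto_atTop_of_monotone hm with h | ⟨l, h⟩
  · exact Or.inl (h.congr' he)
  · exact Or.inr ⟨l, h.congr' he⟩

/-- Elements of a Hardy field have limits in the extended reals. -/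
lemma limit {f : ℝ → ℝ} (hf : f ∈ H.carrier) :
    Tendsto f atTop atTop ∨ Tendsto f atTop atBot ∨ ∃ l, Tendsto f atTop (𝓝 l) := by
  rcases sign (H.deriv_mem hf) with h | h
  · rcases limit_of_deriv_nonneg hf h with h | h
    · exact Or.inl h
    · exact Or.inr (Or.inr h)
  · rcases limit_of_deriv_nonneg (H.neg_mem hf) (by
      filter_upwards [h] with t ht; rw [deriv.neg]; simpa using ht) with h | ⟨l, h⟩
    · refine Or.inr (Or.inl ?_)
      exact (tendsto_neg_atTop_atBot.comp h).congr fun t => by simp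
    · exact Or.inr (Or.inr ⟨-l, by simpa using h.neg⟩)

/-- Existence of the limit reduces convergence to `0` to excluding one-sided bounds. -/
lemma tendsto_zero {s : ℝ → ℝ} (hs : s ∈ H.carrier)
    (h1 : ∀ ε > 0, ¬ ∀ᶠ t in atTop, ε ≤ s t) (h2 : ∀ ε > 0, ¬ ∀ᶠ t in atTop, s t ≤ -ε) :
    Tendsto s atTop (𝓝 0) := by
  rcases limit hs with h | h | ⟨l, h⟩
  · exact (h1 1 one_pos (h.eventually_ge_atTop 1)).elim
  · exact (h2 1 one_pos (h.eventually_le_atBot (-1))).elim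
  · rcases lt_trichotomy l 0 with hl | rfl | hl
    · refine (h2 (-l/2) (by linarith) ?_).elim
      filter_upwards [h.eventually_lt_const (show l < l / 2 by linarith)] with t ht
      linarith
    · exact h
    · refine (h1 (l/2) (by linarith) ?_).elim
      filter_upwards [h.eventually_const_lt (show l/2 < l by linarith)] with t ht
      linarith

lemma div_mem {f g : ℝ → ℝ} (hf : f ∈ H.carrier) (hg : g ∈ H.carrier)
    (h : ¬ g =ᶠ[atTop] (0 : ℝ → ℝ)) : (fun t => f t / g t) ∈ H.carrier := by
  obtain ⟨k, hk, hgk⟩ := H.inv_mem hg h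
  refine H.mem_congr (H.mul_mem hf hk) ?_
  filter_upwards [hgk, ne_zero hg h] with t h1 h2
  have h1 : g t * k t = 1 := h1
  simp only [Pi.mul_apply]
  rw [eq_div_iff h2, mul_assoc, mul_comm (k t), h1, mul_one]

lemma rpow_mem (H : HardyField) (c : ℝ) : (fun t : ℝ => t ^ c) ∈ H.carrier := by
  refine H.mem_congr (H.exp_comp_mem (H.mul_mem (H.log_comp_mem H.id_mem tendsto_id)
    (H.const_mem c))) ?_
  filter_upwards [eventually_gt_atTop 0] with t ht
  rw [Real.rpow_def_of_pos ht]; rfl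

/-- Membership of `t u'/u`, whose limit is the growth exponent of `u`. -/
lemma logDeriv_mem {u : ℝ → ℝ} (hu : u ∈ H.carrier) (h0 : ¬ u =ᶠ[atTop] (0 : ℝ → ℝ)) :
    (fun t => t * deriv u t / u t) ∈ H.carrier :=
  div_mem (H.mul_mem H.id_mem (H.deriv_mem hu)) hu h0

/-- If `t r' ≥ ε > 0` then `r` grows at least like `ε log t`, so `r` cannot converge. -/
lemma not_ge_deriv {r : ℝ → ℝ} (hr : r ∈ H.carrier) {β : ℝ} (h : Tendsto r atTop (𝓝 β))
    {ε : ℝ} (hε : 0 < ε) : ¬ ∀ᶠ t in atTop, ε ≤ t * deriv r t := by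
  intro hcon
  obtain ⟨a, ha⟩ := ev_mono (w := fun t => r t - ε * Real.log t)
    (w' := fun t => deriv r t - ε * t⁻¹)
    (by
      filter_upwards [hasDeriv hr, eventually_gt_atTop 0] with t h1 h3
      exact h1.sub ((Real.hasDerivAt_log h3.ne').const_mul ε))
    (by
      filter_upwards [hcon, eventually_gt_atTop 0] with t h1 h3
      have : deriv r t - ε * t⁻¹ = (t * deriv r t - ε) * t⁻¹ := by field_simp
      rw [this]
      exact mul_nonneg (sub_nonneg.2 h1) (inv_nonneg.2 h3.le))
  have h1 : Tendsto (fun t => (r a - ε * Real.log a) + ε * Real.log t) atTop atTop :=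
    tendsto_atTop_add_const_left _ _ (Real.tendsto_log_atTop.const_mul_atTop hε)
  refine not_tendsto_nhds_of_tendsto_atTop (tendsto_atTop_mono' _ ?_ h1) β h
  filter_upwards [eventually_ge_atTop a] with t ht
  have := ha a le_rfl t ht
  linarith

lemma tendsto_mul_deriv {r : ℝ → ℝ} (hr : r ∈ H.carrier) {β : ℝ} (h : Tendsto r atTop (𝓝 β)) :
    Tendsto (fun t => t * deriv r t) atTop (𝓝 0) := by
  refine tendsto_zero (H.mul_mem H.id_mem (H.deriv_mem hr))
    (fun ε hε => not_ge_deriv hr h hε) (fun ε hε hcon => ?_)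
  refine not_ge_deriv (H.neg_mem hr) h.neg hε ?_
  filter_upwards [hcon] with t ht
  have ht : t * deriv r t ≤ -ε := ht
  rw [deriv.neg]; linarith

/-- If `t u'/u = O(t^{-ε})` then `log |u|` converges, so `u` has a finite nonzero limit. -/
lemma limit_of_small {u : ℝ → ℝ} (hu : u ∈ H.carrier) (h0 : ¬ u =ᶠ[atTop] (0 : ℝ → ℝ))
    {C ε : ℝ} (hε : 0 < ε) (h : ∀ᶠ t in atTop, |t * deriv u t / u t| ≤ C * t ^ (-ε)) :
    ∃ l, l ≠ 0 ∧ Tendsto u atTop (𝓝 l) := by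
  have hp : ∀ᶠ t : ℝ in atTop,
      HasDerivAt (fun t : ℝ => (C / ε) * t ^ (-ε)) (-(C * t ^ (-ε)) / t) t := by
    filter_upwards [eventually_gt_atTop 0] with t ht
    have := (Real.hasDerivAt_rpow_const (x := t) (p := -ε) (Or.inl ht.ne')).const_mul (C / ε)
    refine this.congr_deriv ?_
    rw [Real.rpow_sub_one ht.ne']; field_simp
  have hL : ∀ᶠ t in atTop, HasDerivAt (fun t => Real.log (u t)) (deriv u t / u t) t := by
    filter_upwards [hasDeriv hu, ne_zero hu h0] with t h1 h2 using h1.log h2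
  have hb : ∀ᶠ t in atTop, |deriv u t / u t| ≤ C * t ^ (-ε) / t := by
    filter_upwards [h, eventually_gt_atTop 0] with t h1 h2
    rw [le_div_iff₀ h2]
    rwa [mul_div_assoc, abs_mul, abs_of_pos h2, mul_comm] at h1
  obtain ⟨a, ha⟩ := ev_mono (w := fun t => Real.log (u t) - (C / ε) * t ^ (-ε))
    (w' := fun t => deriv u t / u t - (-(C * t ^ (-ε)) / t))
    (by filter_upwards [hp, hL] with t h1 h2 using h2.sub h1)
    (by
      filter_upwards [hb] with t h1
      have := (abs_le.1 h1).1
      rw [neg_div]; linarith)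
  obtain ⟨b, hb⟩ := ev_mono (w := fun t => -Real.log (u t) - (C / ε) * t ^ (-ε))
    (w' := fun t => -(deriv u t / u t) - (-(C * t ^ (-ε)) / t))
    (by filter_upwards [hp, hL] with t h1 h2 using h2.neg.sub h1)
    (by
      filter_upwards [hb] with t h1
      have := (abs_le.1 h1).2
      rw [neg_div]; linarith)
  have hz : Tendsto (fun t : ℝ => (C / ε) * t ^ (-ε)) atTop (𝓝 0) := by
    simpa using (tendsto_rpow_neg_atTop hε).const_mul (C / ε)
  have hbd : ∃ B, ∀ᶠ t in atTop, |Real.log (u t)| ≤ B := by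
    refine ⟨max (-(Real.log (u a) - (C / ε) * a ^ (-ε)) + 1)
      (-(-Real.log (u b) - (C / ε) * b ^ (-ε)) + 1), ?_⟩
    filter_upwards [eventually_ge_atTop a, eventually_ge_atTop b,
      hz.eventually_lt_const one_pos, hz.eventually_const_lt neg_one_lt_zero] with t h1 h2 h3 h4
    have e1 := ha a le_rfl t h1
    have e2 := hb b le_rfl t h2
    have e3 := le_max_left (-(Real.log (u a) - (C / ε) * a ^ (-ε)) + 1)
      (-(-Real.log (u b) - (C / ε) * b ^ (-ε)) + 1)
    have e4 := le_max_right (-(Real.log (u a) - (C / ε) * a ^ (-ε)) + 1)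
      (-(-Real.log (u b) - (C / ε) * b ^ (-ε)) + 1)
    rw [abs_le]
    constructor <;> linarith
  obtain ⟨B, hB⟩ := hbd
  have hB' : ∀ᶠ t in atTop, Real.exp (-B) ≤ |u t| ∧ |u t| ≤ Real.exp B := by
    filter_upwards [hB, ne_zero hu h0] with t h1 h2
    rw [← Real.exp_log_eq_abs h2]
    rw [abs_le] at h1
    exact ⟨Real.exp_le_exp.2 h1.1, Real.exp_le_exp.2 h1.2⟩
  rcases limit hu with h | h | ⟨l, h⟩
  · obtain ⟨t, h1, h2⟩ := ((h.eventually_gt_atTop (Real.exp B)).and hB').exists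
    linarith [le_abs_self (u t)]
  · obtain ⟨t, h1, h2⟩ := ((h.eventually_lt_atBot (-Real.exp B)).and hB').exists
    linarith [neg_abs_le (u t)]
  · refine ⟨l, ?_, h⟩
    rintro rfl
    have := ge_of_tendsto h.abs (hB'.mono fun t ht => ht.1)
    simp at this
    linarith [Real.exp_pos (-B)]

/-- One differentiation lowers the growth exponent by one. -/
lemma step {u : ℝ → ℝ} (hu : u ∈ H.carrier) (h0 : ¬ u =ᶠ[atTop] (0 : ℝ → ℝ)) {β : ℝ}
    (h : Tendsto (fun t => t * deriv u t / u t) atTop (𝓝 β))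
    (hβ : β = 0 → ¬ ∃ l, l ≠ 0 ∧ Tendsto u atTop (𝓝 l)) :
    (¬ deriv u =ᶠ[atTop] (0 : ℝ → ℝ)) ∧
      Tendsto (fun t => t * deriv (deriv u) t / deriv u t) atTop (𝓝 (β - 1)) := by
  set r : ℝ → ℝ := fun t => t * deriv u t / u t with hr
  have hrH : r ∈ H.carrier := logDeriv_mem hu h0
  have hr0 : ¬ r =ᶠ[atTop] (0 : ℝ → ℝ) := by
    intro hcon
    have hβ0 : β = 0 := tendsto_nhds_unique h (tendsto_const_nhds.congr' hcon.symm)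
    refine hβ hβ0 (limit_of_small hu h0 one_pos (C := 1) ?_)
    filter_upwards [hcon, eventually_gt_atTop 0] with t ht h3
    have ht : t * deriv u t / u t = 0 := ht
    rw [ht]; simp; positivity
  have hs : Tendsto (fun t => t * deriv r t / r t) atTop (𝓝 0) := by
    have h1 := tendsto_mul_deriv hrH h
    by_cases hb : β = 0
    · refine tendsto_zero (logDeriv_mem hrH hr0) (fun ε hε hcon => ?_) (fun ε hε hcon => ?_)
      · obtain ⟨c, hc, hc'⟩ := lower_growth (hasDeriv hrH) (ne_zero hrH hr0) hcon
        refine not_tendsto_nhds_of_tendsto_atTop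
          (tendsto_atTop_mono' _ hc' ((tendsto_rpow_atTop hε).const_mul_atTop hc)) _ h.abs
      · obtain ⟨C, hC, hC'⟩ := upper_growth (hasDeriv hrH) (ne_zero hrH hr0) hcon
        exact hβ hb (limit_of_small hu h0 hε hC')
    · rw [← zero_div β]; exact h1.div h hb
  have hu0 : ∀ᶠ t in atTop, deriv u t ≠ 0 := by
    filter_upwards [ne_zero hrH hr0] with t ht h2
    exact ht (by simp [hr, h2])
  refine ⟨fun hcon => ?_, ?_⟩
  · obtain ⟨t, h1, h2⟩ := (hcon.and hu0).exists
    exact h2 h1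
  · have := (hs.add h).sub_const 1
    rw [zero_add] at this
    refine this.congr' ?_
    filter_upwards [hasDeriv hu, hasDeriv (H.deriv_mem hu), ne_zero hu h0, hu0,
      eventually_gt_atTop 0] with t h1 h2 h3 h4 h5
    have hd : deriv r t = ((1 * deriv u t + t * deriv (deriv u) t) * u t
        - t * deriv u t * deriv u t) / u t ^ 2 :=
      (((hasDerivAt_id t).mul h2).div h1 h3).deriv
    rw [hd]
    simp only [hr]
    field_simp
    ring

/-- If `t u'/u → β`, then `|u| = t^(β + o(1))`; here the lower half, used for `t^c |u|^p`. -/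
lemma tendsto_atTop_of_exponent {u : ℝ → ℝ} (hu : u ∈ H.carrier)
    (h0 : ¬ u =ᶠ[atTop] (0 : ℝ → ℝ)) {β : ℝ}
    (h : Tendsto (fun t => t * deriv u t / u t) atTop (𝓝 β)) {c p : ℝ} (hp : 0 < p)
    (hc : 0 < c + β * p) : Tendsto (fun t : ℝ => t ^ c * |u t| ^ p) atTop atTop := by
  obtain ⟨b, hb1, hb2⟩ : ∃ b, -c / p < b ∧ b < β :=
    exists_between (by rw [div_lt_iff₀ hp]; linarith)
  rw [div_lt_iff₀ hp] at hb1
  obtain ⟨c', hc', hl⟩ := lower_growth (hasDeriv hu) (ne_zero hu h0)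
    ((h.eventually_const_lt hb2).mono fun t ht => ht.le)
  refine tendsto_atTop_mono' _ ?_ ((tendsto_rpow_atTop (y := c + b * p)
    (by linarith)).const_mul_atTop (Real.rpow_pos_of_pos hc' p))
  filter_upwards [hl, eventually_gt_atTop 0] with t h1 h2
  have h3 := Real.rpow_le_rpow (by positivity) h1 hp.le
  rw [Real.mul_rpow hc'.le (by positivity), ← Real.rpow_mul h2.le] at h3
  rw [Real.rpow_add h2]
  calc _ = t ^ c * (c' ^ p * t ^ (b * p)) := by ring
    _ ≤ _ := by gcongr

/-- If `t u'/u → β`, then `|u| = t^(β + o(1))`; here the upper half, used for `t^c |u|^p`. -/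
lemma tendsto_zero_of_exponent {u : ℝ → ℝ} (hu : u ∈ H.carrier)
    (h0 : ¬ u =ᶠ[atTop] (0 : ℝ → ℝ)) {β : ℝ}
    (h : Tendsto (fun t => t * deriv u t / u t) atTop (𝓝 β)) {c p : ℝ} (hp : 0 < p)
    (hc : c + β * p < 0) : Tendsto (fun t : ℝ => t ^ c * |u t| ^ p) atTop (𝓝 0) := by
  obtain ⟨b, hb1, hb2⟩ : ∃ b, β < b ∧ b < -c / p :=
    exists_between (by rw [lt_div_iff₀ hp]; linarith)
  rw [lt_div_iff₀ hp] at hb2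
  obtain ⟨C, hC, hl⟩ := upper_growth (hasDeriv hu) (ne_zero hu h0)
    ((h.eventually_lt_const hb1).mono fun t ht => ht.le)
  have hz : Tendsto (fun t : ℝ => C ^ p * t ^ (c + b * p)) atTop (𝓝 0) := by
    have := (tendsto_rpow_neg_atTop (y := -(c + b * p)) (by linarith)).const_mul (C ^ p)
    simpa using this
  refine tendsto_of_tendsto_of_tendsto_of_le_of_le' tendsto_const_nhds hz ?_ ?_
  · filter_upwards [eventually_gt_atTop 0] with t h2
    positivity
  filter_upwards [hl, eventually_gt_atTop 0] with t h1 h2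
  have h3 := Real.rpow_le_rpow (by positivity) h1 hp.le
  rw [Real.mul_rpow hC.le (by positivity), ← Real.rpow_mul h2.le] at h3
  rw [Real.rpow_add h2]
  calc _ ≤ t ^ c * (C ^ p * t ^ (b * p)) := by gcongr
    _ = _ := by ring

open Asymptotics in
lemma not_zero_of_isBigO {f : ℝ → ℝ} {δ : ℝ} (h : (fun t : ℝ => t ^ δ) =O[atTop] f) :
    ¬ f =ᶠ[atTop] (0 : ℝ → ℝ) := by
  intro hcon
  obtain ⟨C, hC⟩ := h.bound
  obtain ⟨t, h1, h2, h3⟩ := (hC.and (hcon.and (eventually_gt_atTop 0))).exists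
  rw [h2] at h1
  simp at h1
  have : 0 < t ^ δ := Real.rpow_pos_of_pos h3 δ
  linarith

open Asymptotics in
lemma bound_of_isBigO {f : ℝ → ℝ} {δ : ℝ} (h : (fun t : ℝ => t ^ δ) =O[atTop] f) :
    ∃ c, 0 < c ∧ ∀ᶠ t in atTop, c * t ^ δ ≤ |f t| := by
  obtain ⟨C, hC, hb⟩ := h.exists_pos
  refine ⟨C⁻¹, inv_pos.2 hC, ?_⟩
  filter_upwards [hb.bound, eventually_gt_atTop 0] with t h1 h2
  have : 0 < t ^ δ := Real.rpow_pos_of_pos h2 δ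
  rw [Real.norm_eq_abs, Real.norm_eq_abs, abs_of_pos this] at h1
  rw [inv_mul_eq_div, div_le_iff₀ hC]; linarith

open Asymptotics in
lemma not_eventually_le {f : ℝ → ℝ} (hf : f ∈ H.carrier) {δ b : ℝ}
    (h : (fun t : ℝ => t ^ δ) =O[atTop] f) (hb : b < δ) :
    ¬ ∀ᶠ t in atTop, t * deriv f t / f t ≤ b := by
  intro hcon
  obtain ⟨c, hc, h1⟩ := bound_of_isBigO h
  obtain ⟨C, hC, h2⟩ := upper_growth (hasDeriv hf) (ne_zero hf (not_zero_of_isBigO h)) hcon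
  refine rpow_lt_contra hb (div_pos hc hC) ?_
  filter_upwards [h1, h2] with t h1 h2
  rw [div_mul_eq_mul_div, div_le_iff₀ hC]; linarith

open Asymptotics in
lemma le_exponent {f : ℝ → ℝ} (hf : f ∈ H.carrier) {δ α : ℝ}
    (h : (fun t : ℝ => t ^ δ) =O[atTop] f)
    (hα : Tendsto (fun t => t * deriv f t / f t) atTop (𝓝 α)) : δ ≤ α := by
  by_contra! hcon
  obtain ⟨b, hb1, hb2⟩ := exists_between hcon
  exact not_eventually_le hf h hb2 ((hα.eventually_lt_const hb1).mono fun t ht => ht.le)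

open Asymptotics in
/-- The germ `t f'/f` has a limit by the Hardy field property, and polynomial upper and lower bounds
on `f` keep this limit finite. -/
lemma exists_exponent {f : ℝ → ℝ} (hf : f ∈ H.carrier) {δ : ℝ} {n : ℕ}
    (h : (fun t : ℝ => t ^ δ) =O[atTop] f)
    (hn : Tendsto (fun t : ℝ => f t / t ^ n) atTop (𝓝 0)) :
    ∃ α, Tendsto (fun t => t * deriv f t / f t) atTop (𝓝 α) := by
  have h0 := not_zero_of_isBigO h
  rcases limit (logDeriv_mem hf h0) with h1 | h1 | h1
  · obtain ⟨c, hc, h2⟩ := lower_growth (hasDeriv hf) (ne_zero hf h0)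
      (h1.eventually_ge_atTop ((n : ℝ) + 1))
    refine (rpow_lt_contra (a := n) (b := (n : ℝ) + 1) (by linarith) hc ?_).elim
    filter_upwards [h2, (by simpa using hn.abs : Tendsto _ _ _).eventually_lt_const one_pos,
      eventually_gt_atTop 0] with t h3 h4 h5
    rw [abs_div, abs_of_pos (pow_pos h5 n), div_lt_one (by positivity)] at h4
    rw [Real.rpow_natCast t n]; linarith
  · exact (not_eventually_le hf h (b := δ - 1) (by linarith)
      (h1.eventually_le_atBot (δ - 1))).elim
  · exact h1

/-- A function lying strictly between `t^d` and `t^(d+1)` is asymptotic to no monomial. -/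
lemma no_monomial {f : ℝ → ℝ} {d : ℕ} (h1 : Tendsto (fun t : ℝ => t ^ d / f t) atTop (𝓝 0))
    (h2 : Tendsto (fun t : ℝ => f t / t ^ (d + 1)) atTop (𝓝 0)) (h0 : ∀ᶠ t in atTop, f t ≠ 0)
    (m : ℕ) {l : ℝ} (hl : l ≠ 0) : ¬ Tendsto (fun t => f t / t ^ m) atTop (𝓝 l) := by
  intro h
  rcases le_or_gt m d with hm | hm
  · -- here `t^d / t^m = (t^d / f) (f / t^m)` tends to `0`, although it is at least `1`
    have h3 := h1.mul h
    rw [zero_mul] at h3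
    obtain ⟨t, h4, h5, h6⟩ := ((h3.eventually_lt_const one_pos).and
      ((eventually_ge_atTop 1).and h0)).exists
    have h7 : (0 : ℝ) < t ^ m := by positivity
    rw [div_mul_div_cancel₀ h6, div_lt_one h7] at h4
    exact absurd (pow_le_pow_right₀ h5 hm) (not_le.2 h4)
  · have h3 := h2.div h hl
    rw [zero_div] at h3
    obtain ⟨t, h4, h5, h6⟩ := ((h3.eventually_lt_const one_pos).and
      ((eventually_ge_atTop 1).and h0)).exists
    have h7 : (0 : ℝ) < t ^ m := by positivity
    have h8 : (0 : ℝ) < t ^ (d + 1) := by positivity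
    have : f t / t ^ (d + 1) / (f t / t ^ m) = t ^ m / t ^ (d + 1) := by field_simp
    simp only [Pi.div_apply] at h4
    rw [this, div_lt_one h8] at h4
    exact absurd (pow_le_pow_right₀ h5 hm) (not_le.2 h4)

/-- Every derivative `f^(k)` has growth exponent `α - k`. As long as no exponent `α - i`, `i < k`,
vanishes, `f^(k)` is moreover asymptotic to a nonzero multiple of `f / t^k`. -/
lemma iterate {f : ℝ → ℝ} (hf : f ∈ H.carrier) (h0 : ¬ f =ᶠ[atTop] (0 : ℝ → ℝ)) {α : ℝ}
    (hα : Tendsto (fun t => t * deriv f t / f t) atTop (𝓝 α))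
    (hm : ∀ (m : ℕ) (l : ℝ), l ≠ 0 → ¬ Tendsto (fun t => f t / t ^ m) atTop (𝓝 l)) (k : ℕ) :
    iteratedDeriv k f ∈ H.carrier ∧ (¬ iteratedDeriv k f =ᶠ[atTop] (0 : ℝ → ℝ)) ∧
    Tendsto (fun t => t * iteratedDeriv (k + 1) f t / iteratedDeriv k f t) atTop (𝓝 (α - k)) ∧
    ((∀ i : ℕ, i < k → α ≠ i) →
      ∃ C, C ≠ 0 ∧ Tendsto (fun t => t ^ k * iteratedDeriv k f t / f t) atTop (𝓝 C)) := by
  induction k with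
  | zero =>
    refine ⟨by simpa using hf, by simpa using h0, by simpa [iteratedDeriv_one] using hα,
      fun _ => ⟨1, one_ne_zero, ?_⟩⟩
    refine tendsto_const_nhds.congr' ?_
    filter_upwards [ne_zero hf h0] with t ht
    simp [ht]
  | succ k ih =>
    obtain ⟨i1, i2, i3, i4⟩ := ih
    have hs : ∀ n, iteratedDeriv (n + 1) f = deriv (iteratedDeriv n f) := fun n =>
      iteratedDeriv_succ
    have hst := step i1 i2 (β := α - k) (by rw [hs] at i3; exact i3) (by
      rintro hz ⟨l, hl, hlim⟩
      have hαk : α = k := sub_eq_zero.1 hz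
      obtain ⟨C, hC, hC'⟩ := i4 (fun i hi => by rw [hαk]; exact_mod_cast hi.ne')
      refine hm k (l / C) (div_ne_zero hl hC) ((hlim.div hC' hC).congr' ?_)
      filter_upwards [ne_zero i1 i2, ne_zero hf h0, eventually_gt_atTop 0] with t e1 e2 e3
      simp only [Pi.div_apply]
      field_simp)
    refine ⟨by rw [hs]; exact H.deriv_mem i1, by rw [hs]; exact hst.1, ?_, fun hi => ?_⟩
    · rw [hs (k + 1), hs k]
      convert hst.2 using 2
      push_cast; ring
    · obtain ⟨C, hC, hC'⟩ := i4 (fun i hik => hi i (by omega))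
      refine ⟨(α - k) * C, mul_ne_zero (sub_ne_zero.2 (hi k (by omega))) hC,
        (i3.mul hC').congr' ?_⟩
      filter_upwards [ne_zero i1 i2] with t e1
      rw [pow_succ]
      field_simp

/-- Up to factors `t^(o(1))`, the endpoints of `S(f,k)` are `t^(1 - α/k)` and `t^(1 - α/(k+1))`.
Powers with exponent strictly in between belong to `S(f,k)`. -/
lemma pow_mem_SClass {f : ℝ → ℝ} {α c : ℝ} {k : ℕ} (hk : 0 < k)
    (h : ∀ k, iteratedDeriv k f ∈ H.carrier ∧ (¬ iteratedDeriv k f =ᶠ[atTop] (0 : ℝ → ℝ)) ∧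
      Tendsto (fun t => t * deriv (iteratedDeriv k f) t / iteratedDeriv k f t) atTop
        (𝓝 (α - k)))
    (h1 : α / (k + 1) < 1 - c ∧ 1 - c < α / k) : (fun t : ℝ => t ^ c) ∈ SClass H f k := by
  have hk' : (0 : ℝ) < k := by exact_mod_cast hk
  refine ⟨rpow_mem H c, Or.inl ?_, ?_⟩
  · refine (tendsto_atTop_of_exponent (h k).1 (h k).2.1 (h k).2.2 (c := c)
      (inv_pos.2 hk') ?_).congr' ?_
    · have : (α - k) * (k : ℝ)⁻¹ = α / k - 1 := by field_simp
      rw [this]; linarith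
    · filter_upwards [eventually_gt_atTop 0] with t ht
      rw [abs_of_pos (Real.rpow_pos_of_pos ht c)]
  · refine tendsto_zero_of_exponent (h (k + 1)).1 (h (k + 1)).2.1 (h (k + 1)).2.2
      (by positivity) ?_
    have : (α - (k + 1 : ℕ)) * ((k : ℝ) + 1)⁻¹ = α / (k + 1) - 1 := by push_cast; field_simp
    rw [this]; linarith

/-- At the critical exponent `c = 1 - α/k`, the power `t^c` lies in `S(f,k)` or in `S(f,k-1)`,
according to whether the limit of `t^(k-α) |f^(k)|` is nonzero or zero. -/
lemma critical_pow_mem_SClass {f : ℝ → ℝ} {α c : ℝ} {k : ℕ} (hk : 0 < k) (hα : 0 < α)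
    (h : ∀ k, iteratedDeriv k f ∈ H.carrier ∧ (¬ iteratedDeriv k f =ᶠ[atTop] (0 : ℝ → ℝ)) ∧
      Tendsto (fun t => t * deriv (iteratedDeriv k f) t / iteratedDeriv k f t) atTop
        (𝓝 (α - k)))
    (hc : 1 - c = α / (k + 1)) :
    (fun t : ℝ => t ^ c) ∈ SClass H f (k + 1) ∨ (fun t : ℝ => t ^ c) ∈ SClass H f k := by
  have hk' : (0 : ℝ) < k := by exact_mod_cast hk
  set q : ℝ := (k : ℝ) + 1 with hq
  have hqp : 0 < q := by positivity
  have hv : (fun t : ℝ => t ^ (c * q) * iteratedDeriv (k + 1) f t) ∈ H.carrier :=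
    H.mul_mem (rpow_mem H _) (h (k + 1)).1
  have hcont : Continuous fun x : ℝ => x ^ q⁻¹ := Real.continuous_rpow_const (by positivity)
  -- `t^c |f^(k+1)|^(1/q)` is the `q`-th root of the absolute value of an element of the field
  have he : ∀ᶠ t : ℝ in atTop, |t ^ (c * q) * iteratedDeriv (k + 1) f t| ^ q⁻¹ =
      t ^ c * |iteratedDeriv (k + 1) f t| ^ q⁻¹ := by
    filter_upwards [eventually_gt_atTop 0] with t ht
    rw [abs_mul, Real.mul_rpow (abs_nonneg _) (abs_nonneg _),
      abs_of_pos (Real.rpow_pos_of_pos ht _), ← Real.rpow_mul ht.le,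
      mul_inv_cancel_right₀ hqp.ne']
  have hup : Tendsto (fun t : ℝ => t ^ c * |iteratedDeriv (k + 1 + 1) f t|
      ^ (((k + 1 : ℕ) : ℝ) + 1)⁻¹) atTop (𝓝 0) := by
    refine tendsto_zero_of_exponent (h (k + 1 + 1)).1 (h (k + 1 + 1)).2.1 (h (k + 1 + 1)).2.2
      (by positivity) ?_
    have e : (α - (k + 1 + 1 : ℕ)) * (((k + 1 : ℕ) : ℝ) + 1)⁻¹ = α / (q + 1) - 1 := by
      push_cast; rw [hq]; field_simp
    rw [e]
    have : α / (q + 1) < α / q := div_lt_div_of_pos_left hα hqp (by linarith)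
    linarith
  have habs : ∀ᶠ t : ℝ in atTop, t ^ c * |iteratedDeriv (k + 1) f t| ^ q⁻¹ =
      |t ^ c| * |iteratedDeriv (k + 1) f t| ^ (((k + 1 : ℕ) : ℝ))⁻¹ := by
    filter_upwards [eventually_gt_atTop 0] with t ht
    rw [abs_of_pos (Real.rpow_pos_of_pos ht c), Nat.cast_succ]
  have hinf : Tendsto (fun t : ℝ => |t ^ (c * q) * iteratedDeriv (k + 1) f t|) atTop atTop →
      (fun t : ℝ => t ^ c) ∈ SClass H f (k + 1) := fun hl =>
    ⟨rpow_mem H c, Or.inl ((((tendsto_rpow_atTop (inv_pos.2 hqp)).comp hl).congr' he).congr'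
      habs), hup⟩
  rcases limit hv with hl | hl | ⟨l, hl⟩
  · exact Or.inl (hinf (tendsto_abs_atTop_atTop.comp hl))
  · exact Or.inl (hinf (tendsto_abs_atBot_atTop.comp hl))
  · have hl' := (((hcont.tendsto _).comp hl.abs).congr' he)
    by_cases hl0 : l = 0
    · right
      refine ⟨rpow_mem H c, Or.inl ?_, ?_⟩
      · refine (tendsto_atTop_of_exponent (h k).1 (h k).2.1 (h k).2.2 (c := c)
          (inv_pos.2 hk') ?_).congr' ?_
        · have : (α - k) * (k : ℝ)⁻¹ = α / k - 1 := by field_simp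
          have : α / q < α / k := div_lt_div_of_pos_left hα hk' (by linarith)
          linarith
        · filter_upwards [eventually_gt_atTop 0] with t ht
          rw [abs_of_pos (Real.rpow_pos_of_pos ht c)]
      · rw [hl0, abs_zero, Real.zero_rpow (inv_pos.2 hqp).ne'] at hl'
        exact hl'
    · left
      exact ⟨rpow_mem H c, Or.inr ⟨|l| ^ q⁻¹, Real.rpow_pos_of_pos (abs_pos.2 hl0) _,
        hl'.congr' habs⟩, hup⟩

end HardyField

/-- Pointwise form of the gap estimate, with `A = |f^(k)|` and `B = |f^(k+1)|`: as `B ≤ M A / t`, the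
ratio of endpoints is bounded below by a multiple of `(t^k A)^(1/(k(k+1)))`. -/
lemma ratio_bound {A B t c M δ k : ℝ} (hA : 0 < A) (hB : 0 < B) (ht : 0 < t) (hc : 0 < c)
    (hM : 0 < M) (hk : 0 < k) (h1 : t * B / A ≤ M) (h2 : c * t ^ (δ - k) ≤ A) :
    M ^ (-(k + 1)⁻¹) * c ^ (k * (k + 1))⁻¹ * t ^ (δ / (k * (k + 1))) ≤
      B ^ (-(k + 1)⁻¹) / A ^ (-k⁻¹) := by
  have hBle : B ≤ M * A * t⁻¹ := by
    rw [div_le_iff₀ hA] at h1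
    rw [← div_eq_mul_inv, le_div_iff₀ ht]; linarith
  have hk1 : 0 < k + 1 := by linarith
  have e1 : (M * A * t⁻¹) ^ (-(k + 1)⁻¹) ≤ B ^ (-(k + 1)⁻¹) :=
    Real.rpow_le_rpow_of_nonpos hB hBle (by simp only [Left.neg_nonpos_iff]; positivity)
  have e2 := Real.rpow_le_rpow (by positivity) h2 (show 0 ≤ (k * (k + 1))⁻¹ by positivity)
  rw [Real.mul_rpow hc.le (by positivity), ← Real.rpow_mul ht.le] at e2
  rw [Real.mul_rpow (by positivity) (by positivity), Real.mul_rpow hM.le hA.le,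
    Real.inv_rpow ht.le, ← Real.rpow_neg ht.le, neg_neg] at e1
  have e3 : A ^ (-(k + 1)⁻¹) / A ^ (-k⁻¹) = A ^ (k * (k + 1))⁻¹ := by
    rw [← Real.rpow_sub hA]; congr 1; field_simp; ring
  have e4 : t ^ ((δ - k) * (k * (k + 1))⁻¹) * t ^ (k + 1)⁻¹ = t ^ (δ / (k * (k + 1))) := by
    rw [← Real.rpow_add ht]; congr 1; field_simp; ring
  calc _ = M ^ (-(k + 1)⁻¹) * (c ^ (k * (k + 1))⁻¹ * t ^ ((δ - k) * (k * (k + 1))⁻¹)) *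
        t ^ (k + 1)⁻¹ := by rw [← e4]; ring
    _ ≤ M ^ (-(k + 1)⁻¹) * A ^ (k * (k + 1))⁻¹ * t ^ (k + 1)⁻¹ := by gcongr
    _ = (M ^ (-(k + 1)⁻¹) * A ^ (-(k + 1)⁻¹) * t ^ (k + 1)⁻¹) / A ^ (-k⁻¹) := by
      rw [← e3]; ring
    _ ≤ _ := by gcongr

open Asymptotics in
/-- Basic properties of the classes `S(f,k)` of a strongly non-polynomial
Hardy field function `f` dominating a fractional power: (i) for large `k` the class `S(f,k)`
is non-empty, and for `0 < δ < 1` with `t^δ ≪ f` the endpoints of `S(f,k)` differ by at least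
`t^{δ/(k(k+1))}`; (ii) for `c < 1` close enough to `1`, `t^c` belongs to some `S(f,k₀)`;
(iii) for every large `k`, `t^c ∉ S(f,k)` for all `c < 1` close enough to `1`. -/
theorem statement18 (H : HardyField) (f : ℝ → ℝ) (hfH : f ∈ H.carrier)
    (hsnp : ∃ d : ℕ, Tendsto (fun t : ℝ => t ^ d / f t) atTop (𝓝 0) ∧
      Tendsto (fun t : ℝ => f t / t ^ (d + 1)) atTop (𝓝 0))
    (hfrac : ∃ δ : ℝ, 0 < δ ∧ (fun t : ℝ => t ^ δ) =O[atTop] f) :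
    (∃ k₀ : ℕ, 0 < k₀ ∧ ∀ k ≥ k₀,
      (SClass H f k).Nonempty ∧
      ∀ δ : ℝ, 0 < δ → δ < 1 → (fun t : ℝ => t ^ δ) =O[atTop] f →
        ∃ c : ℝ, 0 < c ∧ ∀ᶠ t in atTop,
          c * t ^ (δ / (k * (k + 1)) : ℝ) ≤
            |iteratedDeriv (k + 1) f t| ^ (-((k : ℝ) + 1)⁻¹) /
              |iteratedDeriv k f t| ^ (-(k : ℝ)⁻¹)) ∧
    (∃ c₀ : ℝ, 0 < c₀ ∧ c₀ < 1 ∧ ∀ c : ℝ, c₀ < c → c < 1 →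
      ∃ k₀ : ℕ, (fun t : ℝ => t ^ c) ∈ SClass H f k₀) ∧
    (∃ k₀ : ℕ, ∀ k ≥ k₀, ∃ c₁ : ℝ, 0 < c₁ ∧ c₁ < 1 ∧ ∀ c : ℝ, c₁ < c → c < 1 →
      (fun t : ℝ => t ^ c) ∉ SClass H f k) := by
  obtain ⟨d, hd1, hd2⟩ := hsnp
  obtain ⟨δ₀, hδ₀, hO⟩ := hfrac
  have h0 := HardyField.not_zero_of_isBigO hO
  obtain ⟨α, hα⟩ := HardyField.exists_exponent hfH hO hd2
  have hαpos : 0 < α := hδ₀.trans_le (HardyField.le_exponent hfH hO hα)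
  have hit := HardyField.iterate hfH h0 hα
    (fun m l hl => HardyField.no_monomial hd1 hd2 (HardyField.ne_zero hfH h0) m hl)
  have hit' : ∀ k, iteratedDeriv k f ∈ H.carrier ∧
      (¬ iteratedDeriv k f =ᶠ[atTop] (0 : ℝ → ℝ)) ∧
      Tendsto (fun t => t * deriv (iteratedDeriv k f) t / iteratedDeriv k f t) atTop
        (𝓝 (α - k)) := fun k =>
    ⟨(hit k).1, (hit k).2.1, by have := (hit k).2.2.1; rwa [iteratedDeriv_succ] at this⟩
  refine ⟨⟨1, one_pos, fun k hk => ⟨?_, fun δ hδ hδ1 hδO => ?_⟩⟩, ?_, ?_⟩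
  · have hk' : (0 : ℝ) < k := by exact_mod_cast hk
    obtain ⟨b, hb⟩ : ∃ b, α / (k + 1) < b ∧ b < α / k :=
      exists_between (div_lt_div_of_pos_left hαpos hk' (by linarith))
    exact ⟨_, HardyField.pow_mem_SClass (c := 1 - b) hk hit' (by simpa using hb)⟩
  · have hk' : (0 : ℝ) < k := by exact_mod_cast hk
    have hle := HardyField.le_exponent hfH hδO hα
    have hlow : ∃ c, 0 < c ∧ ∀ᶠ t in atTop, c * t ^ (δ - k) ≤ |iteratedDeriv k f t| := by
      rcases hle.lt_or_eq with hlt | heq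
      · exact lower_growth (HardyField.hasDeriv (hit' k).1)
          (HardyField.ne_zero (hit' k).1 (hit' k).2.1)
          (((hit' k).2.2.eventually_const_lt (show δ - k < α - k by linarith)).mono
            fun t ht => ht.le)
      · -- here `α = δ ∈ (0,1)` is not an integer
        obtain ⟨C, hC, hC'⟩ := (hit k).2.2.2 (fun i _ hi => by
          rw [← heq] at hi
          have h1 : (0 : ℝ) < i := hi ▸ hδ
          have h2 : (i : ℝ) < 1 := hi ▸ hδ1
          norm_cast at h1 h2
          omega)
        obtain ⟨c, hc, hcb⟩ := HardyField.bound_of_isBigO hδO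
        have hC2 : |C| / 2 < |C| := by have := abs_pos.2 hC; linarith
        have hCp : 0 < |C| / 2 := by have := abs_pos.2 hC; linarith
        refine ⟨|C| / 2 * c, by positivity, ?_⟩
        filter_upwards [hC'.abs.eventually_const_lt hC2, hcb, HardyField.ne_zero hfH h0,
          eventually_gt_atTop 0] with t e1 e2 e3 e4
        rw [abs_div, abs_mul, abs_of_pos (show 0 < t ^ k by positivity),
          lt_div_iff₀ (abs_pos.2 e3)] at e1
        rw [Real.rpow_sub e4, Real.rpow_natCast, ← mul_div_assoc,
          div_le_iff₀ (by positivity)]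
        calc |C| / 2 * c * t ^ δ = |C| / 2 * (c * t ^ δ) := by ring
          _ ≤ |C| / 2 * |f t| := by gcongr
          _ ≤ _ := by linarith
    obtain ⟨c, hc, hcb⟩ := hlow
    set M : ℝ := |α - k| + 1 with hMdef
    have hM : 0 < M := by positivity
    refine ⟨M ^ (-((k : ℝ) + 1)⁻¹) * c ^ ((k : ℝ) * (k + 1))⁻¹, by positivity, ?_⟩
    filter_upwards [hcb, (hit k).2.2.1.abs.eventually_lt_const (show |α - k| < M by linarith),
      HardyField.ne_zero (hit' k).1 (hit' k).2.1,
      HardyField.ne_zero (hit' (k + 1)).1 (hit' (k + 1)).2.1,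
      eventually_gt_atTop 0] with t e1 e2 e3 e4 e5
    refine ratio_bound (abs_pos.2 e3) (abs_pos.2 e4) e5 hc hM hk' ?_ e1
    rw [abs_div, abs_mul, abs_of_pos e5] at e2
    exact e2.le
  · refine ⟨max (1 / 2) (1 - α / 2), lt_max_of_lt_left (by norm_num),
      max_lt (by norm_num) (by linarith), fun c hc hc1 => ?_⟩
    have hc2 : 1 - α / 2 < c := (le_max_right _ _).trans_lt hc
    have hpos : 0 < 1 - c := by linarith
    have hge : 2 ≤ α / (1 - c) := by rw [le_div_iff₀ hpos]; linarith
    -- `k` is the integer with `α/(k+1) < 1 - c ≤ α/k`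
    obtain ⟨k, hk⟩ : ∃ k : ℕ, k + 1 = ⌊α / (1 - c)⌋₊ := by
      have : 2 ≤ ⌊α / (1 - c)⌋₊ := Nat.le_floor (by exact_mod_cast hge)
      exact ⟨⌊α / (1 - c)⌋₊ - 1, by omega⟩
    have hk0 : 0 < k := by
      have : 2 ≤ ⌊α / (1 - c)⌋₊ := Nat.le_floor (by exact_mod_cast hge)
      omega
    have f1 : ((k + 1 : ℕ) : ℝ) ≤ α / (1 - c) := by
      rw [hk]; exact Nat.floor_le (by linarith)
    have f2 : α / (1 - c) < ((k + 1 : ℕ) : ℝ) + 1 := by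
      rw [hk]; exact Nat.lt_floor_add_one _
    have hkp : (0 : ℝ) < ((k + 1 : ℕ) : ℝ) := by positivity
    rw [le_div_iff₀ hpos] at f1
    rw [div_lt_iff₀ hpos] at f2
    have g1 : 1 - c ≤ α / ((k + 1 : ℕ) : ℝ) := by rw [le_div_iff₀ hkp]; linarith
    have g2 : α / (((k + 1 : ℕ) : ℝ) + 1) < 1 - c := by
      rw [div_lt_iff₀ (by positivity)]; linarith
    rcases g1.lt_or_eq with hlt | heq
    · exact ⟨k + 1, HardyField.pow_mem_SClass (Nat.succ_pos k) hit' ⟨g2, hlt⟩⟩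
    · rw [Nat.cast_succ] at heq
      rcases HardyField.critical_pow_mem_SClass hk0 hαpos hit' heq with h | h
      · exact ⟨_, h⟩
      · exact ⟨_, h⟩
  · refine ⟨0, fun k _ => ⟨max (1 / 2) (1 - α / (k + 1)), lt_max_of_lt_left (by norm_num),
      max_lt (by norm_num) (by have : 0 < α / ((k : ℝ) + 1) := by positivity
                               linarith), fun c hc hc1 hmem => ?_⟩⟩
    have hc2 : 1 - α / ((k : ℝ) + 1) < c := (le_max_right _ _).trans_lt hc
    refine not_tendsto_nhds_of_tendsto_atTop (HardyField.tendsto_atTop_of_exponent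
      (hit' (k + 1)).1 (hit' (k + 1)).2.1 (hit' (k + 1)).2.2 (c := c) (by positivity) ?_)
      0 hmem.2.2
    have : (α - (k + 1 : ℕ)) * ((k : ℝ) + 1)⁻¹ = α / (k + 1) - 1 := by push_cast; field_simp
    rw [this]; linarith
end
end

section
/- Let f,g ∈ H be strongly non-polynomial functions, each satisfying t^δ ≪ f(t) and t^δ ≪ g(t) for some δ > 0, with g(t) ≪ f(t). Then: (i) S(f,k) = S(g,k) holds for some k (with both classes defined) if and only if f ~ g; (ii) if S(f,k) ∩ S(g,ℓ) ≠ ∅ then k ≥ ℓ; moreover, if the function |f^{(k)}(t)|^{−1/k} belongs to S(g,ℓ) and f is not ~ g, then k ≥ ℓ + 1; (iii) there exist infinitely many pairs of integers (k,ℓ) such that S(f,k) ∩ S(g,ℓ) ≠ ∅. -/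
/-!
Two germs of a Hardy field `H` are always comparable, because every germ has eventually constant
sign, is eventually monotone, and so has a limit in `[-∞, ∞]`. The main tool is the following form
of L'Hôpital's rule (`HardyField.deriv_isLittleO`): if `a ≺ b` and `b` is not asymptotic to a
constant, then `a' ≺ b'`. Otherwise `a - ε b` would be monotone in a direction incompatible with
`a ≺ b`, for some `ε`.

Say that `a` has growth exponent `β` if `t ^ γ ≺ a ≺ t ^ γ'` for all `γ < β < γ'`. Comparing with
powers of `t`, the rule shows that differentiation lowers the exponent by exactly one, as long as
`a` is not asymptotic to a constant. A strongly non-polynomial `f ≫ t ^ δ` has an exponent `α > 0`,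
and no derivative of `f` is asymptotic to a monomial, so `f^{(k)}` has exponent `α - k` for every
`k`, and the endpoint `f_k = |f^{(k)}|^{-1/k}` has exponent `1 - α / k`. In particular
`f_k ≺ f_{k+1}`, and `S(f,k)` consists of the `h ∈ H` with `f_k ≪ h ≺ f_{k+1}`. The rule also
transfers each of `g ≺ f`, `g ≪ f` and `g ~ f` to the `k`-th derivatives.

* If `f ~ g`, the endpoints of the classes agree up to constants. If not, then `g ≺ f`, hence
  `f_k ≺ g_k`, and `f_k` belongs to `S(f,k)` but not to `S(g,k)`.
* If `h ∈ S(f,k) ∩ S(g,ℓ)` with `k < ℓ`, then `h ≺ f_{k+1} ≪ g_{k+1} ≪ g_ℓ ≪ h`, which is absurd.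
* The exponents `1 - β / ℓ` of the `g_ℓ` increase to `1`, and `f_k` has exponent `1 - α / k < 1`,
  which is close to `1` for `k` large. So for every large `k` the function `f_k` lies in `S(g,ℓ)`
  for some `ℓ`, which gives infinitely many pairs.
-/

open Filter MeasureTheory Topology

noncomputable section

/-! ### Limits and signs of germs in a Hardy field -/

namespace HardyField

variable {H : HardyField}

open Asymptotics

lemma eventually_differentiable {a : ℝ → ℝ} (ha : a ∈ H.carrier) :
    ∀ᶠ t in atTop, DifferentiableAt ℝ a t := by
  obtain ⟨x, hx⟩ := H.smooth a ha
  filter_upwards [eventually_gt_atTop x] with t ht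
  exact (hx.contDiffAt (Ioi_mem_nhds ht)).differentiableAt (by simp)

lemma eventually_ne_zero {a : ℝ → ℝ} (ha : a ∈ H.carrier) (h0 : ¬ a =ᶠ[atTop] 0) :
    ∀ᶠ t in atTop, a t ≠ 0 := by
  obtain ⟨b, -, hab⟩ := H.inv_mem ha h0
  filter_upwards [hab] with t ht h
  simp [h] at ht

lemma trichotomy {a : ℝ → ℝ} (ha : a ∈ H.carrier) :
    a =ᶠ[atTop] 0 ∨ (∀ᶠ t in atTop, 0 < a t) ∨ ∀ᶠ t in atTop, a t < 0 := by
  by_cases h0 : a =ᶠ[atTop] 0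
  · exact Or.inl h0
  right
  obtain ⟨x, hx⟩ := eventually_atTop.1 ((eventually_ne_zero ha h0).and
    (eventually_differentiable ha))
  have hc : ContinuousOn a (Set.Ici x) := fun t ht =>
    (hx t ht).2.continuousAt.continuousWithinAt
  -- A sign change on `[x, ∞)` would produce a zero there.
  have key : ∀ s ∈ Set.Ici x, ∀ t ∈ Set.Ici x, 0 < a s → 0 < a t := by
    intro s hs t ht hs0
    by_contra hlt
    have hlt' : a t ≤ 0 := not_lt.1 hlt
    obtain ⟨y, hy, hy0⟩ := (isPreconnected_Ici.intermediate_value ht hs hc) ⟨hlt', hs0.le⟩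
    exact (hx y hy).1 hy0
  rcases lt_or_gt_of_ne (hx x le_rfl).1 with h | h
  · right
    filter_upwards [eventually_ge_atTop x] with t ht
    by_contra hlt
    have : 0 < a t := lt_of_le_of_ne (not_lt.1 hlt) (hx t ht).1.symm
    exact absurd (key t ht x Set.self_mem_Ici this) h.not_gt
  · left
    filter_upwards [eventually_ge_atTop x] with t ht
    exact key x Set.self_mem_Ici t ht h

/-- A function with eventually non-negative derivative is non-decreasing on a half-line. -/
lemma exists_monotoneOn {a : ℝ → ℝ} (ha : a ∈ H.carrier)
    (h : ∀ᶠ t in atTop, 0 ≤ deriv a t) : ∃ x, MonotoneOn a (Set.Ici x) := by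
  obtain ⟨x, hx⟩ := eventually_atTop.1 (h.and (eventually_differentiable ha))
  refine ⟨x, monotoneOn_of_deriv_nonneg (convex_Ici x)
    (fun t ht => (hx t ht).2.continuousAt.continuousWithinAt)
    (fun t ht => ?_) (fun t ht => ?_)⟩
  · exact (hx t (interior_subset ht)).2.differentiableWithinAt
  · exact (hx t (interior_subset ht)).1

lemma tendsto_of_deriv_nonneg {a : ℝ → ℝ} (ha : a ∈ H.carrier)
    (h : ∀ᶠ t in atTop, 0 ≤ deriv a t) :
    Tendsto a atTop atTop ∨ ∃ c, Tendsto a atTop (𝓝 c) := by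
  obtain ⟨x, hx⟩ := exists_monotoneOn ha h
  have hm : Monotone (fun t => a (max t x)) := fun s t hst =>
    hx (Set.mem_Ici.2 (le_max_right _ _)) (Set.mem_Ici.2 (le_max_right _ _))
      (max_le_max_right x hst)
  have he : (fun t => a (max t x)) =ᶠ[atTop] a := by
    filter_upwards [eventually_ge_atTop x] with t ht
    rw [max_eq_left ht]
  rcases tendsto_atTop_of_monotone hm with h | ⟨c, h⟩
  · exact Or.inl (h.congr' he)
  · exact Or.inr ⟨c, h.congr' he⟩

lemma deriv_neg_fun (a : ℝ → ℝ) : deriv (-a) = -deriv a := by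
  funext t; exact deriv.neg

lemma exists_limit {a : ℝ → ℝ} (ha : a ∈ H.carrier) :
    Tendsto a atTop atTop ∨ Tendsto a atTop atBot ∨ ∃ c, Tendsto a atTop (𝓝 c) := by
  have pos : (∀ᶠ t in atTop, 0 ≤ deriv a t) →
      Tendsto a atTop atTop ∨ Tendsto a atTop atBot ∨ ∃ c, Tendsto a atTop (𝓝 c) := fun h => by
    rcases tendsto_of_deriv_nonneg ha h with h | h
    · exact Or.inl h
    · exact Or.inr (Or.inr h)
  rcases trichotomy (H.deriv_mem ha) with h | h | h
  · exact pos (h.mono fun t ht => ht.symm.le)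
  · exact pos (h.mono fun t ht => ht.le)
  · have h' : ∀ᶠ t in atTop, 0 ≤ deriv (-a) t := by
      filter_upwards [h] with t ht
      rw [deriv_neg_fun]
      simpa using ht.le
    rcases tendsto_of_deriv_nonneg (H.neg_mem ha) h' with h | ⟨c, h⟩
    · right; left
      simpa using tendsto_neg_atTop_iff.1 h
    · right; right
      exact ⟨-c, by simpa using h.neg⟩

/-! ### Closure properties -/

lemma sub_mem {a b : ℝ → ℝ} (ha : a ∈ H.carrier) (hb : b ∈ H.carrier) : a - b ∈ H.carrier := by
  rw [sub_eq_add_neg]; exact H.add_mem ha (H.neg_mem hb)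

lemma smul_mem (c : ℝ) {a : ℝ → ℝ} (ha : a ∈ H.carrier) : (fun t => c * a t) ∈ H.carrier :=
  H.mul_mem (H.const_mem c) ha

lemma inv_mem' {a : ℝ → ℝ} (ha : a ∈ H.carrier) : a⁻¹ ∈ H.carrier := by
  by_cases h0 : a =ᶠ[atTop] 0
  · refine H.mem_congr H.zero_mem ?_
    filter_upwards [h0] with t ht
    simp [ht]
  · obtain ⟨b, hb, hab⟩ := H.inv_mem ha h0
    refine H.mem_congr hb ?_
    filter_upwards [hab] with t ht
    exact eq_inv_of_mul_eq_one_right ht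

lemma div_mem_s19 {a b : ℝ → ℝ} (ha : a ∈ H.carrier) (hb : b ∈ H.carrier) : a / b ∈ H.carrier := by
  rw [div_eq_mul_inv]; exact H.mul_mem ha (inv_mem' hb)

lemma abs_mem {a : ℝ → ℝ} (ha : a ∈ H.carrier) : (fun t => |a t|) ∈ H.carrier := by
  rcases trichotomy ha with h | h | h
  · refine H.mem_congr H.zero_mem (h.mono fun t ht => ?_)
    simp [ht]
  · exact H.mem_congr ha (h.mono fun t ht => (abs_of_pos ht).symm)
  · exact H.mem_congr (H.neg_mem ha) (h.mono fun t ht => (abs_of_neg ht).symm)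

/-- The field axioms give `log ∘ a` only for `a → +∞`; the other positive germs reduce to this
case through `1 / a` when `a → 0` and through `t * a` when `a` has a positive finite limit. -/
lemma log_mem {a : ℝ → ℝ} (ha : a ∈ H.carrier) (hp : ∀ᶠ t in atTop, 0 < a t) :
    (fun t => Real.log (a t)) ∈ H.carrier := by
  rcases exists_limit ha with h | h | ⟨c, h⟩
  · exact H.log_comp_mem ha h
  · exfalso
    obtain ⟨t, h1, h2⟩ := (hp.and (h.eventually (eventually_lt_atBot 0))).exists
    exact lt_asymm h1 h2
  · have hc : 0 ≤ c := ge_of_tendsto h (hp.mono fun t ht => ht.le)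
    rcases hc.eq_or_lt with rfl | hc
    · have hi : Tendsto a⁻¹ atTop atTop :=
        (tendsto_nhdsWithin_iff.2 ⟨h, hp⟩).inv_tendsto_nhdsGT_zero
      refine H.mem_congr (H.neg_mem (H.log_comp_mem (inv_mem' ha) hi)) ?_
      refine Eventually.of_forall fun t => ?_
      simp [Real.log_inv]
    · have hm : Tendsto (a * fun t => t) atTop atTop := h.pos_mul_atTop hc tendsto_id
      refine H.mem_congr (sub_mem (H.log_comp_mem (H.mul_mem ha H.id_mem) hm)
        (H.log_comp_mem H.id_mem tendsto_id)) ?_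
      filter_upwards [hp, eventually_gt_atTop 0] with t h1 h2
      simp [Real.log_mul h1.ne' h2.ne']

lemma rpow_mem_s19 {a : ℝ → ℝ} (ha : a ∈ H.carrier) (hp : ∀ᶠ t in atTop, 0 < a t) (r : ℝ) :
    (fun t => a t ^ r) ∈ H.carrier := by
  refine H.mem_congr (H.exp_comp_mem (smul_mem r (log_mem ha hp))) ?_
  filter_upwards [hp] with t ht
  rw [Real.rpow_def_of_pos ht, mul_comm]

lemma tpow_mem (r : ℝ) : (fun t : ℝ => t ^ r) ∈ H.carrier :=
  rpow_mem_s19 H.id_mem (eventually_gt_atTop 0) r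

lemma iteratedDeriv_mem {a : ℝ → ℝ} (ha : a ∈ H.carrier) (k : ℕ) :
    iteratedDeriv k a ∈ H.carrier := by
  induction k with
  | zero => simpa using ha
  | succ k ih => rw [iteratedDeriv_succ]; exact H.deriv_mem ih

/-! ### Comparison of germs -/

/-- Any two germs are comparable. -/
lemma compare {a b : ℝ → ℝ} (ha : a ∈ H.carrier) (hb : b ∈ H.carrier)
    (h0 : ∀ᶠ t in atTop, b t ≠ 0) :
    a =o[atTop] b ∨ b =o[atTop] a ∨ ∃ c, c ≠ 0 ∧ Tendsto (fun t => a t / b t) atTop (𝓝 c) := by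
  have hinf : Tendsto (fun t => |a t / b t|) atTop atTop → b =o[atTop] a := by
    intro h
    have ha0 : ∀ᶠ t in atTop, a t ≠ 0 := by
      filter_upwards [h.eventually (eventually_gt_atTop 0)] with t ht h
      simp [h] at ht
    refine (isLittleO_iff_tendsto' (ha0.mono fun t ht h => absurd h ht)).2 ?_
    rw [tendsto_zero_iff_abs_tendsto_zero]
    refine h.inv_tendsto_atTop.congr fun t => ?_
    simp [abs_div]
  rcases exists_limit (div_mem_s19 ha hb) with h | h | ⟨c, h⟩
  · exact Or.inr (Or.inl (hinf (tendsto_abs_atTop_atTop.comp h)))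
  · exact Or.inr (Or.inl (hinf (tendsto_abs_atBot_atTop.comp h)))
  · by_cases hc : c = 0
    · subst hc
      exact Or.inl ((isLittleO_iff_tendsto' (h0.mono fun t ht h => absurd h ht)).2 h)
    · exact Or.inr (Or.inr ⟨c, hc, h⟩)

lemma isLittleO_or_isBigO {a b : ℝ → ℝ} (ha : a ∈ H.carrier) (hb : b ∈ H.carrier)
    (h0 : ∀ᶠ t in atTop, b t ≠ 0) : a =o[atTop] b ∨ b =O[atTop] a := by
  rcases compare ha hb h0 with h | h | ⟨c, hc, h⟩
  · exact Or.inl h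
  · exact Or.inr h.isBigO
  · exact Or.inr (isBigO_of_div_tendsto_nhds_of_ne_zero h hc)

/-- The germ `a` is not asymptotic to a constant: it is not eventually zero and has no nonzero
finite limit. -/
def NonConst (a : ℝ → ℝ) : Prop :=
  (∀ᶠ t in atTop, a t ≠ 0) ∧ ∀ c, c ≠ 0 → ¬ Tendsto a atTop (𝓝 c)

lemma deriv_ne_zero {b : ℝ → ℝ} (hb : b ∈ H.carrier) (hn : NonConst b) :
    ∀ᶠ t in atTop, deriv b t ≠ 0 := by
  refine eventually_ne_zero (H.deriv_mem hb) fun h0 => ?_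
  -- If `b' = 0` eventually, then both `b` and `-b` are monotone, so `b` is constant.
  obtain ⟨x, hx⟩ := exists_monotoneOn hb (h0.mono fun t ht => ht.symm.le)
  obtain ⟨y, hy⟩ := exists_monotoneOn (H.neg_mem hb) (h0.mono fun t ht => by
    rw [deriv_neg_fun]; simp [ht])
  obtain ⟨z, hz⟩ := eventually_atTop.1 hn.1
  set m := max (max x y) z
  have hmx : x ≤ m := (le_max_left _ _).trans (le_max_left _ _)
  have hmy : y ≤ m := (le_max_right _ _).trans (le_max_left _ _)
  refine hn.2 (b m) (hz m (le_max_right _ _)) (tendsto_const_nhds.congr' ?_)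
  filter_upwards [eventually_ge_atTop m] with t ht
  refine le_antisymm (hx hmx (hmx.trans ht) ht) ?_
  simpa using hy hmy (hmy.trans ht) ht

/-- The one-sided core of `deriv_isLittleO`: if `a' ≥ ε b'` eventually, with `b` increasing, then
`a - ε b` is non-decreasing; this contradicts `a = o(b)`, both when `b → ∞` and when `b → 0`. -/
lemma deriv_lt_of_isLittleO {a b : ℝ → ℝ} (ha : a ∈ H.carrier) (hb : b ∈ H.carrier)
    (hn : NonConst b) (hb' : ∀ᶠ t in atTop, 0 < deriv b t) (hab : a =o[atTop] b)
    {ε : ℝ} (hε : 0 < ε) : ∀ᶠ t in atTop, deriv a t < ε * deriv b t := by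
  set e : ℝ → ℝ := fun t => a t - ε * b t
  have he : e ∈ H.carrier := sub_mem ha (smul_mem ε hb)
  have hde : ∀ᶠ t in atTop, deriv e t = deriv a t - ε * deriv b t := by
    filter_upwards [eventually_differentiable ha, eventually_differentiable hb] with t h1 h2
    exact (h1.hasDerivAt.sub (h2.hasDerivAt.const_mul ε)).deriv
  suffices h : ¬ ∀ᶠ t in atTop, 0 ≤ deriv e t by
    rcases trichotomy (H.deriv_mem he) with h' | h' | h'
    · exact absurd (h'.mono fun t ht => ht.symm.le) h
    · exact absurd (h'.mono fun t ht => ht.le) h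
    · filter_upwards [h', hde] with t h1 h2
      linarith
  intro h
  obtain ⟨x, hx⟩ := exists_monotoneOn he h
  have hsmall := hab.bound (half_pos hε)
  rcases tendsto_of_deriv_nonneg hb (hb'.mono fun t ht => ht.le) with hinf | ⟨c, hc⟩
  · have h2 : Tendsto (fun t => (ε / 2) * b t) atTop atTop :=
      hinf.const_mul_atTop (half_pos hε)
    obtain ⟨t, h1, h3, h4, h5⟩ := (hsmall.and ((h2.eventually (eventually_gt_atTop (-e x))).and
      ((eventually_ge_atTop x).and (hinf.eventually (eventually_gt_atTop 0))))).exists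
    have h6 : e x ≤ e t := hx Set.self_mem_Ici h4 h4
    rw [Real.norm_eq_abs, Real.norm_eq_abs, abs_of_pos h5] at h1
    have := (abs_le.1 h1).2
    simp only [e] at h6 h3
    linarith
  · have hc0 : c = 0 := by
      by_contra hne
      exact hn.2 c hne hc
    subst hc0
    have ha0 : Tendsto a atTop (𝓝 0) := hab.isBigO.trans_tendsto hc
    have he0 : Tendsto e atTop (𝓝 0) := by simpa [e] using ha0.sub (hc.const_mul ε)
    have hle : ∀ t, x ≤ t → e t ≤ 0 := fun t ht => ge_of_tendsto he0 (by
      filter_upwards [eventually_ge_atTop t] with s hs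
      exact hx ht (ht.trans hs) hs)
    obtain ⟨y, hy⟩ := exists_monotoneOn hb (hb'.mono fun t ht => ht.le)
    obtain ⟨t, h1, h2, h3, h4⟩ := (hsmall.and ((eventually_ge_atTop x).and
      ((eventually_ge_atTop y).and hn.1))).exists
    have hbt : b t ≤ 0 := ge_of_tendsto hc (by
      filter_upwards [eventually_ge_atTop t] with s hs
      exact hy h3 (h3.trans hs) hs)
    have hbt' : b t < 0 := lt_of_le_of_ne hbt h4
    rw [Real.norm_eq_abs, Real.norm_eq_abs, abs_of_neg hbt'] at h1
    have h5 := (abs_le.1 h1).1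
    have h6 := hle t h2
    simp only [e] at h6
    nlinarith

lemma NonConst.neg {b : ℝ → ℝ} (hn : NonConst b) : NonConst (-b) :=
  ⟨hn.1.mono fun t ht => by simpa using ht,
    fun c hc h => hn.2 (-c) (neg_ne_zero.2 hc) (by simpa using h.neg)⟩

/-- Differentiation preserves `a ≺ b` as soon as `b` is not asymptotic to a constant. -/
lemma deriv_isLittleO {a b : ℝ → ℝ} (ha : a ∈ H.carrier) (hb : b ∈ H.carrier)
    (hn : NonConst b) (hab : a =o[atTop] b) : deriv a =o[atTop] deriv b := by
  have pos : ∀ b : ℝ → ℝ, b ∈ H.carrier → NonConst b → a =o[atTop] b →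
      (∀ᶠ t in atTop, 0 < deriv b t) → deriv a =o[atTop] deriv b := by
    intro b hb hn hab h
    refine isLittleO_iff.2 fun ε hε => ?_
    filter_upwards [deriv_lt_of_isLittleO ha hb hn h hab hε,
      deriv_lt_of_isLittleO (H.neg_mem ha) hb hn h hab.neg_left hε, h] with t h1 h2 h3
    rw [deriv_neg_fun] at h2
    simp only [Pi.neg_apply] at h2
    rw [Real.norm_eq_abs, Real.norm_eq_abs, abs_of_pos h3]
    exact abs_le.2 ⟨by linarith, h1.le⟩
  rcases trichotomy (H.deriv_mem hb) with h | h | h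
  · obtain ⟨t, h1, h2⟩ := (h.and (deriv_ne_zero hb hn)).exists
    exact absurd h1 h2
  · exact pos b hb hn hab h
  · have := pos (-b) (H.neg_mem hb) hn.neg hab.neg_right (by
      filter_upwards [h] with t ht
      rw [deriv_neg_fun]; simpa using ht)
    rw [deriv_neg_fun] at this
    exact this.of_neg_right

/-! ### Growth exponents -/

lemma tpow_isLittleO {r s : ℝ} (h : r < s) :
    (fun t : ℝ => t ^ r) =o[atTop] fun t : ℝ => t ^ s := by
  refine (isLittleO_iff_tendsto' ?_).2 ?_
  · filter_upwards [eventually_gt_atTop 0] with t ht h0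
    exact absurd h0 (Real.rpow_pos_of_pos ht s).ne'
  · refine (tendsto_rpow_neg_atTop (sub_pos.2 h)).congr' ?_
    filter_upwards [eventually_gt_atTop 0] with t ht
    rw [← Real.rpow_sub ht, neg_sub]

lemma tpow_isBigO {r s : ℝ} (h : r ≤ s) :
    (fun t : ℝ => t ^ r) =O[atTop] fun t : ℝ => t ^ s := by
  rcases h.eq_or_lt with rfl | h
  · exact isBigO_refl _ _
  · exact (tpow_isLittleO h).isBigO

lemma tpow_ne_zero (r : ℝ) : ∀ᶠ t : ℝ in atTop, t ^ r ≠ 0 := by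
  filter_upwards [eventually_gt_atTop 0] with t ht
  exact (Real.rpow_pos_of_pos ht r).ne'

lemma tpow_nonConst {r : ℝ} (hr : r ≠ 0) : NonConst (fun t : ℝ => t ^ r) := by
  refine ⟨tpow_ne_zero r, fun c hc h => ?_⟩
  rcases lt_or_gt_of_ne hr with hr | hr
  · have := tendsto_rpow_neg_atTop (neg_pos.2 hr)
    rw [neg_neg] at this
    exact hc (tendsto_nhds_unique h this)
  · exact not_tendsto_nhds_of_tendsto_atTop (tendsto_rpow_atTop hr) c h

lemma deriv_tpow (r : ℝ) :
    deriv (fun t : ℝ => t ^ r) =ᶠ[atTop] fun t => r * t ^ (r - 1) := by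
  filter_upwards [eventually_gt_atTop 0] with t ht
  exact (Real.hasDerivAt_rpow_const (Or.inl ht.ne')).deriv

/-- The germ `a` has growth exponent `β`: `t ^ γ ≺ a` for `γ < β` and `a ≺ t ^ γ` for
`γ > β`. -/
def HasExp (a : ℝ → ℝ) (β : ℝ) : Prop :=
  (∀ γ < β, (fun t : ℝ => t ^ γ) =o[atTop] a) ∧ ∀ γ > β, a =o[atTop] fun t : ℝ => t ^ γ

/-- The germ `a` is not asymptotic to any nonzero multiple of a power `t ^ j`, `j ∈ ℕ`. -/
def NonPoly (a : ℝ → ℝ) : Prop :=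
  (∀ᶠ t in atTop, a t ≠ 0) ∧
    ∀ (j : ℕ) (c : ℝ), c ≠ 0 → ¬ Tendsto (fun t => a t / t ^ (j : ℝ)) atTop (𝓝 c)

lemma NonPoly.nonConst {a : ℝ → ℝ} (h : NonPoly a) : NonConst a :=
  ⟨h.1, fun c hc ht => h.2 0 c hc (by simpa using ht)⟩

lemma exists_between_ne_zero {a b : ℝ} (h : a < b) : ∃ c, a < c ∧ c < b ∧ c ≠ 0 := by
  obtain ⟨c, h1, h2⟩ := exists_between h
  by_cases hc : c = 0
  · obtain ⟨d, h3, h4⟩ := exists_between h1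
    exact ⟨d, h3, h4.trans h2, (h4.trans_eq hc).ne⟩
  · exact ⟨c, h1, h2, hc⟩

/-- Differentiation lowers the growth exponent by one, including when the exponent is `0`. -/
lemma HasExp.exp_deriv {a : ℝ → ℝ} {β : ℝ} (ha : a ∈ H.carrier) (hn : NonConst a)
    (h : HasExp a β) : HasExp (deriv a) (β - 1) := by
  constructor
  · intro γ hγ
    obtain ⟨r, h1, h2, h3⟩ := exists_between_ne_zero (show γ + 1 < β by linarith)
    have := (deriv_isLittleO (tpow_mem r) ha hn (h.1 r h2)).congr' (deriv_tpow r) EventuallyEq.rfl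
    rw [isLittleO_const_mul_left_iff h3] at this
    exact (tpow_isBigO (by linarith)).trans_isLittleO this
  · intro γ hγ
    obtain ⟨r, h1, h2, h3⟩ := exists_between_ne_zero (show β < γ + 1 by linarith)
    have := (deriv_isLittleO ha (tpow_mem r) (tpow_nonConst h3) (h.2 r h1)).congr'
      EventuallyEq.rfl (deriv_tpow r)
    rw [isLittleO_const_mul_right_iff h3] at this
    exact this.trans_isBigO (tpow_isBigO (by linarith))

lemma tendsto_div_sub {a b : ℝ → ℝ} {c : ℝ} (h0 : ∀ᶠ t in atTop, b t ≠ 0) :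
    Tendsto (fun t => a t / b t) atTop (𝓝 c) ↔ (fun t => a t - c * b t) =o[atTop] b := by
  rw [isLittleO_iff_tendsto' (h0.mono fun t ht h => absurd h ht), ← tendsto_sub_nhds_zero_iff]
  refine tendsto_congr' ?_
  filter_upwards [h0] with t ht
  field_simp

lemma deriv_sub_mul {a b : ℝ → ℝ} (c : ℝ) (ha : a ∈ H.carrier) (hb : b ∈ H.carrier) :
    deriv (fun t => a t - c * b t) =ᶠ[atTop] fun t => deriv a t - c * deriv b t := by
  filter_upwards [eventually_differentiable ha, eventually_differentiable hb] with t h1 h2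
  exact (h1.hasDerivAt.sub (h2.hasDerivAt.const_mul c)).deriv

/-- Asymptotic proportionality passes to derivatives, with the same constant. -/
lemma tendsto_deriv_div {a b : ℝ → ℝ} {c : ℝ} (ha : a ∈ H.carrier) (hb : b ∈ H.carrier)
    (hn : NonConst b) (h : Tendsto (fun t => a t / b t) atTop (𝓝 c)) :
    Tendsto (fun t => deriv a t / deriv b t) atTop (𝓝 c) := by
  rw [tendsto_div_sub hn.1] at h
  rw [tendsto_div_sub (deriv_ne_zero hb hn)]
  exact (deriv_isLittleO (sub_mem ha (smul_mem c hb)) hb hn h).congr' (deriv_sub_mul c ha hb)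
    EventuallyEq.rfl

lemma NonPoly.nonPoly_deriv {a : ℝ → ℝ} (ha : a ∈ H.carrier) (h : NonPoly a) : NonPoly (deriv a) := by
  refine ⟨deriv_ne_zero ha h.nonConst, fun j c hc hlim => ?_⟩
  have hj : ((j + 1 : ℕ) : ℝ) ≠ 0 := by positivity
  have hdt : deriv (fun t : ℝ => t ^ ((j + 1 : ℕ) : ℝ)) =ᶠ[atTop]
      fun t => ((j + 1 : ℕ) : ℝ) * t ^ (j : ℝ) := by
    have := deriv_tpow ((j + 1 : ℕ) : ℝ)
    simpa using this
  have hO : deriv a =O[atTop] fun t : ℝ => t ^ (j : ℝ) :=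
    isBigO_of_div_tendsto_nhds ((tpow_ne_zero _).mono fun t ht h => absurd h ht) c hlim
  rcases compare ha (tpow_mem ((j + 1 : ℕ) : ℝ)) (tpow_ne_zero _) with h1 | h1 | ⟨L, hL, h1⟩
  · have h2 := (deriv_isLittleO ha (tpow_mem _) (tpow_nonConst hj) h1).congr'
      EventuallyEq.rfl hdt
    rw [isLittleO_const_mul_right_iff hj] at h2
    exact hc (tendsto_nhds_unique hlim h2.tendsto_div_nhds_zero)
  · have h2 := (deriv_isLittleO (tpow_mem _) ha h.nonConst h1).congr' hdt EventuallyEq.rfl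
    rw [isLittleO_const_mul_left_iff hj] at h2
    exact (h2.not_isBigO (tpow_ne_zero _).frequently) hO
  · exact h.2 (j + 1) L hL h1

lemma exists_hasExp {a : ℝ → ℝ} (ha : a ∈ H.carrier) {δ D : ℝ} (hδ : 0 < δ)
    (h1 : (fun t : ℝ => t ^ δ) =O[atTop] a) (h2 : a =o[atTop] fun t : ℝ => t ^ D) :
    ∃ α, 0 < α ∧ HasExp a α := by
  set S : Set ℝ := {γ | (fun t : ℝ => t ^ γ) =O[atTop] a}
  have hbdd : BddAbove S := by
    refine ⟨D, fun γ hγ => ?_⟩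
    by_contra hlt
    have h3 : (fun t : ℝ => t ^ γ) =o[atTop] fun t : ℝ => t ^ D := IsBigO.trans_isLittleO hγ h2
    exact h3.not_isBigO (tpow_ne_zero _).frequently (tpow_isBigO (not_le.1 hlt).le)
  refine ⟨sSup S, hδ.trans_le (le_csSup hbdd h1), fun γ hγ => ?_, fun γ hγ => ?_⟩
  · obtain ⟨r, hr, hlt⟩ := exists_lt_of_lt_csSup ⟨δ, h1⟩ hγ
    exact (tpow_isLittleO hlt).trans_isBigO hr
  · rcases isLittleO_or_isBigO ha (tpow_mem γ) (tpow_ne_zero γ) with h | h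
    · exact h
    · exact absurd (le_csSup hbdd h) (not_le.2 hγ)

/-- The standing hypotheses on `f`, condensed: `f ∈ H` has positive growth exponent `α` and is
not asymptotic to a monomial. -/
structure Regular (H : HardyField) (f : ℝ → ℝ) (α : ℝ) : Prop where
  mem : f ∈ H.carrier
  pos : 0 < α
  exp : HasExp f α
  nonPoly : NonPoly f

lemma exists_regular {f : ℝ → ℝ} (hf : f ∈ H.carrier)
    (hsnp : ∃ d : ℕ, Tendsto (fun t : ℝ => t ^ d / f t) atTop (𝓝 0) ∧
      Tendsto (fun t : ℝ => f t / t ^ (d + 1)) atTop (𝓝 0))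
    (hfrac : ∃ δ : ℝ, 0 < δ ∧ (fun t : ℝ => t ^ δ) =O[atTop] f) :
    ∃ α, Regular H f α := by
  obtain ⟨d, hd1, hd2⟩ := hsnp
  obtain ⟨δ, hδ, hfδ⟩ := hfrac
  have hne : ∀ᶠ t in atTop, f t ≠ 0 := by
    filter_upwards [hfδ.eq_zero_imp, tpow_ne_zero δ] with t h1 h2 h3
    exact h2 (h1 h3)
  have e1 : (fun t : ℝ => t ^ (d : ℝ)) =o[atTop] f := by
    rw [isLittleO_iff_tendsto' (hne.mono fun t ht h => absurd h ht)]
    simpa using hd1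
  have e2 : f =o[atTop] fun t : ℝ => t ^ ((d + 1 : ℕ) : ℝ) := by
    rw [isLittleO_iff_tendsto' ((tpow_ne_zero _).mono fun t ht h => absurd h ht)]
    simpa only [Real.rpow_natCast] using hd2
  obtain ⟨α, hα, hexp⟩ := exists_hasExp hf hδ hfδ e2
  refine ⟨α, hf, hα, hexp, hne, fun j c hc h => ?_⟩
  rcases Nat.lt_or_ge d j with hj | hj
  · have : f =o[atTop] fun t : ℝ => t ^ (j : ℝ) :=
      e2.trans_isBigO (tpow_isBigO (by exact_mod_cast hj))
    exact hc (tendsto_nhds_unique h this.tendsto_div_nhds_zero)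
  · have h1 : f =O[atTop] fun t : ℝ => t ^ (j : ℝ) :=
      isBigO_of_div_tendsto_nhds ((tpow_ne_zero _).mono fun t ht h => absurd h ht) c h
    have h2 : (fun t : ℝ => t ^ (j : ℝ)) =o[atTop] f :=
      (tpow_isBigO (by exact_mod_cast hj)).trans_isLittleO e1
    exact h2.not_isBigO (tpow_ne_zero _).frequently h1

namespace Regular

variable {f g : ℝ → ℝ} {α β : ℝ}

lemma nonPoly_iteratedDeriv (hf : Regular H f α) (k : ℕ) : NonPoly (iteratedDeriv k f) := by
  induction k with
  | zero => simpa using hf.nonPoly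
  | succ k ih => rw [iteratedDeriv_succ]; exact ih.nonPoly_deriv (iteratedDeriv_mem hf.mem k)

lemma ne_zero (hf : Regular H f α) (k : ℕ) : ∀ᶠ t in atTop, iteratedDeriv k f t ≠ 0 :=
  (hf.nonPoly_iteratedDeriv k).1

lemma hasExp_iteratedDeriv (hf : Regular H f α) (k : ℕ) :
    HasExp (iteratedDeriv k f) (α - k) := by
  induction k with
  | zero => simpa using hf.exp
  | succ k ih =>
    rw [iteratedDeriv_succ]
    have := ih.exp_deriv (iteratedDeriv_mem hf.mem k) (hf.nonPoly_iteratedDeriv k).nonConst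
    rwa [sub_sub, ← Nat.cast_succ] at this

lemma tendsto_zero (hf : Regular H f α) {k : ℕ} (hk : α < k) :
    Tendsto (iteratedDeriv k f) atTop (𝓝 0) := by
  have := (hf.hasExp_iteratedDeriv k).2 0 (by linarith)
  simpa [isLittleO_one_iff] using this

/-- Since `|f| → ∞`, the class `S(f,k)` is only considered for `k ≥ 1`. -/
lemma one_le_of_tendsto_zero (hf : Regular H f α) {k : ℕ}
    (h : Tendsto (iteratedDeriv k f) atTop (𝓝 0)) : 1 ≤ k := by
  by_contra hk
  obtain rfl : k = 0 := by omega
  rw [iteratedDeriv_zero] at h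
  have h1 := hf.exp.1 0 hf.pos
  simp only [Real.rpow_zero] at h1
  exact ((isLittleO_one_iff ℝ).2 h).not_isBigO hf.nonPoly.1.frequently h1.isBigO

lemma iteratedDeriv_isLittleO (hf : Regular H f α) (hg : g ∈ H.carrier) (h : g =o[atTop] f)
    (k : ℕ) : iteratedDeriv k g =o[atTop] iteratedDeriv k f := by
  induction k with
  | zero => simpa using h
  | succ k ih =>
    rw [iteratedDeriv_succ, iteratedDeriv_succ]
    exact deriv_isLittleO (iteratedDeriv_mem hg k) (iteratedDeriv_mem hf.mem k)
      (hf.nonPoly_iteratedDeriv k).nonConst ih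

lemma iteratedDeriv_tendsto_div (hg : Regular H g β) (hf : f ∈ H.carrier) {c : ℝ}
    (h : Tendsto (fun t => f t / g t) atTop (𝓝 c)) (k : ℕ) :
    Tendsto (fun t => iteratedDeriv k f t / iteratedDeriv k g t) atTop (𝓝 c) := by
  induction k with
  | zero => simpa using h
  | succ k ih =>
    rw [iteratedDeriv_succ, iteratedDeriv_succ]
    exact tendsto_deriv_div (iteratedDeriv_mem hf k) (iteratedDeriv_mem hg.mem k)
      (hg.nonPoly_iteratedDeriv k).nonConst ih

lemma iteratedDeriv_isTheta (hg : Regular H g β) (hf : f ∈ H.carrier) {c : ℝ} (hc : c ≠ 0)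
    (h : Tendsto (fun t => f t / g t) atTop (𝓝 c)) (k : ℕ) :
    iteratedDeriv k f =Θ[atTop] iteratedDeriv k g := by
  have hk := hg.iteratedDeriv_tendsto_div hf h k
  exact ⟨isBigO_of_div_tendsto_nhds ((hg.ne_zero k).mono fun t ht h => absurd h ht) c hk,
    isBigO_of_div_tendsto_nhds_of_ne_zero hk hc⟩

lemma isLittleO_of_not_proportional (hf : Regular H f α) (hg : Regular H g β)
    (hgf : g =O[atTop] f)
    (h : ¬ ∃ c : ℝ, c ≠ 0 ∧ Tendsto (fun t => f t / g t) atTop (𝓝 c)) : g =o[atTop] f := by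
  rcases compare hf.mem hg.mem hg.nonPoly.1 with h1 | h1 | h1
  · exact absurd hgf (h1.not_isBigO hf.nonPoly.1.frequently)
  · exact h1
  · exact absurd h1 h

lemma iteratedDeriv_isBigO (hf : Regular H f α) (hg : Regular H g β) (hgf : g =O[atTop] f)
    (k : ℕ) : iteratedDeriv k g =O[atTop] iteratedDeriv k f := by
  by_cases h : ∃ c : ℝ, c ≠ 0 ∧ Tendsto (fun t => f t / g t) atTop (𝓝 c)
  · obtain ⟨c, hc, h⟩ := h
    exact (hg.iteratedDeriv_isTheta hf.mem hc h k).2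
  · exact (hf.iteratedDeriv_isLittleO hg.mem
      (hf.isLittleO_of_not_proportional hg hgf h) k).isBigO

end Regular

/-! ### The classes `S(f,k)` -/

/-- The lower endpoint `|f^{(k)}|^{-1/k}` of the class `S(f,k)`. -/
def lowerEnd (f : ℝ → ℝ) (k : ℕ) : ℝ → ℝ := fun t => |iteratedDeriv k f t| ^ (-(k : ℝ)⁻¹)

lemma rpow_neg_isLittleO {a b : ℝ → ℝ} {r : ℝ} (hr : 0 < r) (ha : ∀ᶠ t in atTop, a t ≠ 0)
    (h : a =o[atTop] b) : (fun t => |b t| ^ (-r)) =o[atTop] fun t => |a t| ^ (-r) := by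
  have h1 := ((h.norm_norm).rpow hr (Eventually.of_forall fun t => norm_nonneg _)).inv_rev (by
    filter_upwards [ha] with t ht h0
    exact absurd h0 (Real.rpow_pos_of_pos (norm_pos_iff.2 ht) r).ne')
  simpa only [Real.norm_eq_abs, ← Real.rpow_neg (abs_nonneg _)] using h1

lemma rpow_neg_isBigO {a b : ℝ → ℝ} {r : ℝ} (hr : 0 < r) (ha : ∀ᶠ t in atTop, a t ≠ 0)
    (h : a =O[atTop] b) : (fun t => |b t| ^ (-r)) =O[atTop] fun t => |a t| ^ (-r) := by
  have h1 := ((h.norm_norm).rpow hr.le (Eventually.of_forall fun t => norm_nonneg _)).inv_rev (by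
    filter_upwards [ha] with t ht h0
    exact absurd h0 (Real.rpow_pos_of_pos (norm_pos_iff.2 ht) r).ne')
  simpa only [Real.norm_eq_abs, ← Real.rpow_neg (abs_nonneg _)] using h1

namespace Regular

variable {f g : ℝ → ℝ} {α β : ℝ}

lemma lowerEnd_pos (hf : Regular H f α) (k : ℕ) : ∀ᶠ t in atTop, 0 < lowerEnd f k t :=
  (hf.ne_zero k).mono fun _ ht => Real.rpow_pos_of_pos (abs_pos.2 ht) _

lemma lowerEnd_ne_zero (hf : Regular H f α) (k : ℕ) : ∀ᶠ t in atTop, lowerEnd f k t ≠ 0 :=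
  (hf.lowerEnd_pos k).mono fun _ ht => ht.ne'

lemma lowerEnd_mem (hf : Regular H f α) (k : ℕ) : lowerEnd f k ∈ H.carrier :=
  rpow_mem_s19 (abs_mem (iteratedDeriv_mem hf.mem k))
    ((hf.ne_zero k).mono fun _ ht => abs_pos.2 ht) _

/-- Membership in `S(f,k)` in terms of `O` and `o`. -/
lemma mem_SClass_iff (hf : Regular H f α) (k : ℕ) {h : ℝ → ℝ} :
    h ∈ SClass H f k ↔ h ∈ H.carrier ∧ lowerEnd f k =O[atTop] h ∧
      h =o[atTop] lowerEnd f (k + 1) := by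
  have hu : (fun t => |h t| * |iteratedDeriv k f t| ^ (k : ℝ)⁻¹) =
      fun t => |h t| / lowerEnd f k t := by
    funext t
    simp only [lowerEnd]
    rw [Real.rpow_neg (abs_nonneg _), div_inv_eq_mul]
  have hv : (fun t => h t * |iteratedDeriv (k + 1) f t| ^ ((k : ℝ) + 1)⁻¹) =
      fun t => h t / lowerEnd f (k + 1) t := by
    funext t
    simp only [lowerEnd]
    rw [Real.rpow_neg (abs_nonneg _), div_inv_eq_mul, Nat.cast_succ]
  unfold SClass
  rw [Set.mem_ofPred_eq, hu, hv, ← isLittleO_iff_tendsto'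
    ((hf.lowerEnd_ne_zero (k + 1)).mono fun t ht h => absurd h ht)]
  refine and_congr_right fun hh => and_congr_left fun _ => ⟨?_, fun hO => ?_⟩
  · rintro (h1 | ⟨c, hc, h1⟩)
    · refine IsBigO.of_bound 1 ?_
      filter_upwards [h1.eventually (eventually_ge_atTop 1), hf.lowerEnd_pos k] with t h2 h3
      rw [one_le_div h3] at h2
      rwa [Real.norm_eq_abs, Real.norm_eq_abs, abs_of_pos h3, one_mul]
    · have := isBigO_of_div_tendsto_nhds_of_ne_zero h1 hc.ne'
      exact this.of_abs_right
  · have hq : (fun t => |h t|) / lowerEnd f k ∈ H.carrier :=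
      div_mem_s19 (abs_mem hh) (hf.lowerEnd_mem k)
    obtain ⟨C, hC, hbd⟩ := hO.exists_pos
    have hlow : ∀ᶠ t in atTop, C⁻¹ ≤ |h t| / lowerEnd f k t := by
      filter_upwards [hbd.bound, hf.lowerEnd_pos k] with t h2 h3
      rw [Real.norm_eq_abs, Real.norm_eq_abs, abs_of_pos h3] at h2
      rw [le_div_iff₀ h3, inv_mul_le_iff₀ hC]
      exact h2
    have hCi : 0 < C⁻¹ := inv_pos.2 hC
    rcases exists_limit hq with h1 | h1 | ⟨c, h1⟩
    · exact Or.inl h1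
    · obtain ⟨t, h2, h3⟩ := (hlow.and (h1.eventually (eventually_lt_atBot 0))).exists
      exact absurd h3 (not_lt.2 (hCi.le.trans h2))
    · exact Or.inr ⟨c, hCi.trans_le (ge_of_tendsto h1 hlow), h1⟩

/-- The lower endpoint `|f^{(k)}|^{-1/k}` has growth exponent `1 - α / k`. -/
lemma hasExp_lowerEnd (hf : Regular H f α) {k : ℕ} (hk : 1 ≤ k) :
    HasExp (lowerEnd f k) (1 - α / k) := by
  have hk0 : (0 : ℝ) < k := by exact_mod_cast hk
  have key : ∀ γ : ℝ, (fun t : ℝ => |t ^ (k - k * γ - k : ℝ)| ^ (-(k : ℝ)⁻¹)) =ᶠ[atTop]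
      fun t => t ^ γ := by
    intro γ
    filter_upwards [eventually_gt_atTop 0] with t ht
    rw [abs_of_pos (Real.rpow_pos_of_pos ht _), ← Real.rpow_mul ht.le]
    congr 1
    field_simp
    ring
  have hr : 0 < (k : ℝ)⁻¹ := inv_pos.2 hk0
  have hα : k * (α / k) = α := by field_simp
  constructor
  · intro γ hγ
    have : k * γ < k * (1 - α / k) := mul_lt_mul_of_pos_left hγ hk0
    have h1 := (hf.hasExp_iteratedDeriv k).2 (k - k * γ - k) (by linarith)
    exact (rpow_neg_isLittleO hr (hf.ne_zero k) h1).congr' (key γ) EventuallyEq.rfl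
  · intro γ hγ
    have : k * (1 - α / k) < k * γ := mul_lt_mul_of_pos_left hγ hk0
    have h1 := (hf.hasExp_iteratedDeriv k).1 (k - k * γ - k) (by linarith)
    exact (rpow_neg_isLittleO hr (tpow_ne_zero _) h1).congr' EventuallyEq.rfl (key γ)

lemma lowerEnd_isLittleO (hf : Regular H f α) (hg : Regular H g β) {k l : ℕ} (hk : 1 ≤ k)
    (hl : 1 ≤ l) (h : β / l < α / k) : lowerEnd f k =o[atTop] lowerEnd g l := by
  obtain ⟨m, h1, h2⟩ := exists_between (sub_lt_sub_left h 1)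
  exact ((hf.hasExp_lowerEnd hk).2 m h1).trans ((hg.hasExp_lowerEnd hl).1 m h2)

lemma lowerEnd_lt (hf : Regular H f α) {k l : ℕ} (hk : 1 ≤ k) (hkl : k < l) :
    lowerEnd f k =o[atTop] lowerEnd f l :=
  hf.lowerEnd_isLittleO hf hk (hk.trans hkl.le)
    (div_lt_div_of_pos_left hf.pos (by exact_mod_cast hk) (by exact_mod_cast hkl))

lemma lowerEnd_le (hf : Regular H f α) {k l : ℕ} (hk : 1 ≤ k) (hkl : k ≤ l) :
    lowerEnd f k =O[atTop] lowerEnd f l := by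
  rcases hkl.eq_or_lt with rfl | h
  · exact isBigO_refl _ _
  · exact (hf.lowerEnd_lt hk h).isBigO

lemma lowerEnd_mem_SClass (hf : Regular H f α) {k : ℕ} (hk : 1 ≤ k) :
    lowerEnd f k ∈ SClass H f k :=
  (hf.mem_SClass_iff k).2 ⟨hf.lowerEnd_mem k, isBigO_refl _ _, hf.lowerEnd_lt hk k.lt_succ_self⟩

lemma lowerEnd_isBigO_of_isBigO (hf : Regular H f α) (hg : Regular H g β)
    (hgf : g =O[atTop] f) {k : ℕ} (hk : 1 ≤ k) : lowerEnd f k =O[atTop] lowerEnd g k :=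
  rpow_neg_isBigO (inv_pos.2 (by exact_mod_cast hk)) (hg.ne_zero k)
    (hf.iteratedDeriv_isBigO hg hgf k)

lemma lowerEnd_isLittleO_of_isLittleO (hf : Regular H f α) (hg : Regular H g β)
    (hgf : g =o[atTop] f) {k : ℕ} (hk : 1 ≤ k) : lowerEnd f k =o[atTop] lowerEnd g k :=
  rpow_neg_isLittleO (inv_pos.2 (by exact_mod_cast hk)) (hg.ne_zero k)
    (hf.iteratedDeriv_isLittleO hg.mem hgf k)

/-- By symmetry, `f ≪ g ≪ f` gives equality of the classes. -/
lemma SClass_subset (hf : Regular H f α) (hg : Regular H g β) (hgf : g =O[atTop] f)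
    (hfg : f =O[atTop] g) {k : ℕ} (hk : 1 ≤ k) : SClass H f k ⊆ SClass H g k := by
  intro h hh
  obtain ⟨h1, h2, h3⟩ := (hf.mem_SClass_iff k).1 hh
  exact (hg.mem_SClass_iff k).2 ⟨h1, (hg.lowerEnd_isBigO_of_isBigO hf hfg hk).trans h2,
    h3.trans_isBigO (hf.lowerEnd_isBigO_of_isBigO hg hgf (hk.trans k.le_succ))⟩

lemma le_of_inter_nonempty (hf : Regular H f α) (hg : Regular H g β) (hgf : g =O[atTop] f)
    {k l : ℕ} (h : (SClass H f k ∩ SClass H g l).Nonempty) : l ≤ k := by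
  obtain ⟨u, hu1, hu2⟩ := h
  obtain ⟨-, -, h1⟩ := (hf.mem_SClass_iff k).1 hu1
  obtain ⟨-, h2, -⟩ := (hg.mem_SClass_iff l).1 hu2
  by_contra! hlt
  -- `u ≺ |f^{(k+1)}|^{-1/(k+1)} ≪ |g^{(k+1)}|^{-1/(k+1)} ≪ |g^{(l)}|^{-1/l} ≪ u`
  have h3 : u =o[atTop] lowerEnd g l :=
    (h1.trans_isBigO (hf.lowerEnd_isBigO_of_isBigO hg hgf (Nat.le_add_left 1 k))).trans_isBigO
      (hg.lowerEnd_le (Nat.le_add_left 1 k) hlt)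
  exact isLittleO_irrefl (hg.lowerEnd_ne_zero l).frequently (h2.trans_isLittleO h3)

/-- If `g ≺ f`, then `|f^{(k)}|^{-1/k}` lies strictly below the class `S(g,k)`. -/
lemma lowerEnd_notMem_SClass (hf : Regular H f α) (hg : Regular H g β) (hgf : g =o[atTop] f)
    {k : ℕ} (hk : 1 ≤ k) : lowerEnd f k ∉ SClass H g k := fun h =>
  (hf.lowerEnd_isLittleO_of_isLittleO hg hgf hk).not_isBigO (hf.lowerEnd_ne_zero k).frequently
    ((hg.mem_SClass_iff k).1 h).2.1

/-- For all large `k`, the function `|f^{(k)}|^{-1/k}` lies above the first class attached to `g`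
(as `α / k → 0`) but below `t`, which is the limit of the endpoints for `g`; hence it lies in one
of the classes `S(g,ℓ)`. -/
lemma exists_mem_SClass (hf : Regular H f α) (hg : Regular H g β) :
    ∃ K : ℕ, ∀ k ≥ K, Tendsto (iteratedDeriv k f) atTop (𝓝 0) ∧
      ∃ l : ℕ, Tendsto (iteratedDeriv l g) atTop (𝓝 0) ∧
        (SClass H f k ∩ SClass H g l).Nonempty := by
  classical
  obtain ⟨L, hL⟩ := exists_nat_gt β
  have hL0 : (0 : ℝ) < L := hg.pos.trans hL
  have hL1 : 1 ≤ L := by exact_mod_cast hL0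
  obtain ⟨K, hK⟩ := exists_nat_gt (max α (α / (β / L)))
  refine ⟨K, fun k hk => ?_⟩
  have hkK : (K : ℝ) ≤ k := by exact_mod_cast hk
  have hkα : α < k := ((le_max_left _ _).trans_lt hK).trans_le hkK
  have hk0 : (0 : ℝ) < k := hf.pos.trans hkα
  have hk1 : 1 ≤ k := by exact_mod_cast hk0
  have hbase : lowerEnd g L =o[atTop] lowerEnd f k := by
    refine hg.lowerEnd_isLittleO hf hL1 hk1 ?_
    have h1 : α / (β / L) < k := ((le_max_right _ _).trans_lt hK).trans_le hkK
    rw [div_lt_iff₀ (div_pos hg.pos hL0)] at h1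
    rw [div_lt_iff₀ hk0]
    linarith
  have hex : ∃ n : ℕ, lowerEnd f k =o[atTop] lowerEnd g (L + n + 1) := by
    obtain ⟨n, hn⟩ := exists_nat_gt (β / (α / k))
    refine ⟨n, hf.lowerEnd_isLittleO hg hk1 (by omega) ?_⟩
    rw [div_lt_iff₀ (div_pos hf.pos hk0)] at hn
    rw [div_lt_iff₀ (by positivity)]
    push_cast
    have : 0 < α / k := div_pos hf.pos hk0
    nlinarith
  refine ⟨hf.tendsto_zero hkα, L + Nat.find hex, hg.tendsto_zero (by push_cast; linarith [
    (Nat.cast_nonneg (Nat.find hex) : (0 : ℝ) ≤ _)]), lowerEnd f k, hf.lowerEnd_mem_SClass hk1,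
    (hg.mem_SClass_iff _).2 ⟨hf.lowerEnd_mem k, ?_, Nat.find_spec hex⟩⟩
  rcases Nat.eq_zero_or_eq_succ_pred (Nat.find hex) with h0 | h0
  · rw [h0]
    exact hbase.isBigO
  · have hmin := Nat.find_min hex (m := (Nat.find hex).pred) (by omega)
    rw [add_assoc, ← Nat.succ_eq_add_one, ← h0] at hmin
    exact (isLittleO_or_isBigO (hf.lowerEnd_mem k) (hg.lowerEnd_mem _)
      (hg.lowerEnd_ne_zero _)).resolve_left hmin

end Regular

end HardyField

open Asymptotics in
/-- Relations between the classes `S(f,k)` and `S(g,ℓ)` for strongly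
non-polynomial Hardy field functions `f, g` dominating fractional powers with `g ≪ f`:
(i) `S(f,k) = S(g,k)` for some `k` (with both classes defined, i.e. `f^{(k)}, g^{(k)} → 0`)
iff `f ~ g`; (ii) if `S(f,k) ∩ S(g,ℓ) ≠ ∅` then `k ≥ ℓ`, and if `|f^{(k)}|^{-1/k} ∈ S(g,ℓ)`
and `f` is not `~ g`, then `k ≥ ℓ + 1`; (iii) there are infinitely many pairs `(k,ℓ)` with
`S(f,k) ∩ S(g,ℓ) ≠ ∅`. -/
theorem statement19 (H : HardyField) (f g : ℝ → ℝ)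
    (hfH : f ∈ H.carrier) (hgH : g ∈ H.carrier)
    (hfsnp : ∃ d : ℕ, Tendsto (fun t : ℝ => t ^ d / f t) atTop (𝓝 0) ∧
      Tendsto (fun t : ℝ => f t / t ^ (d + 1)) atTop (𝓝 0))
    (hgsnp : ∃ d : ℕ, Tendsto (fun t : ℝ => t ^ d / g t) atTop (𝓝 0) ∧
      Tendsto (fun t : ℝ => g t / t ^ (d + 1)) atTop (𝓝 0))
    (hffrac : ∃ δ : ℝ, 0 < δ ∧ (fun t : ℝ => t ^ δ) =O[atTop] f)
    (hgfrac : ∃ δ : ℝ, 0 < δ ∧ (fun t : ℝ => t ^ δ) =O[atTop] g)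
    (hgf : g =O[atTop] f) :
    ((∃ k : ℕ, Tendsto (iteratedDeriv k f) atTop (𝓝 0) ∧
        Tendsto (iteratedDeriv k g) atTop (𝓝 0) ∧ SClass H f k = SClass H g k) ↔
      ∃ c : ℝ, c ≠ 0 ∧ Tendsto (fun t => f t / g t) atTop (𝓝 c)) ∧
    (∀ k ℓ : ℕ, Tendsto (iteratedDeriv k f) atTop (𝓝 0) →
      Tendsto (iteratedDeriv ℓ g) atTop (𝓝 0) →
      ((SClass H f k ∩ SClass H g ℓ).Nonempty → ℓ ≤ k) ∧
      ((fun t => |iteratedDeriv k f t| ^ (-(k : ℝ)⁻¹)) ∈ SClass H g ℓ →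
        ¬(∃ c : ℝ, c ≠ 0 ∧ Tendsto (fun t => f t / g t) atTop (𝓝 c)) → ℓ + 1 ≤ k)) ∧
    Set.Infinite {p : ℕ × ℕ |
      Tendsto (iteratedDeriv p.1 f) atTop (𝓝 0) ∧
      Tendsto (iteratedDeriv p.2 g) atTop (𝓝 0) ∧
      (SClass H f p.1 ∩ SClass H g p.2).Nonempty} := by
  obtain ⟨α, hf⟩ := HardyField.exists_regular hfH hfsnp hffrac
  obtain ⟨β, hg⟩ := HardyField.exists_regular hgH hgsnp hgfrac
  refine ⟨⟨?_, ?_⟩, fun k ℓ hk hℓ => ⟨hf.le_of_inter_nonempty hg hgf, fun hmem hne => ?_⟩, ?_⟩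
  · rintro ⟨k, hk, -, hS⟩
    by_contra hne
    have hk1 := hf.one_le_of_tendsto_zero hk
    exact hf.lowerEnd_notMem_SClass hg (hf.isLittleO_of_not_proportional hg hgf hne) hk1
      (hS ▸ hf.lowerEnd_mem_SClass hk1)
  · rintro ⟨c, hc, hlim⟩
    have hfg : f =O[atTop] g := by
      simpa using (hg.iteratedDeriv_isTheta hfH hc hlim 0).1
    obtain ⟨k, hk⟩ := exists_nat_gt (max α β)
    have hkf := hf.tendsto_zero ((le_max_left _ _).trans_lt hk)
    have hk1 := hf.one_le_of_tendsto_zero hkf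
    exact ⟨k, hkf, hg.tendsto_zero ((le_max_right _ _).trans_lt hk),
      (hf.SClass_subset hg hgf hfg hk1).antisymm (hg.SClass_subset hf hfg hgf hk1)⟩
  · have hk1 := hf.one_le_of_tendsto_zero hk
    have hle : ℓ ≤ k := hf.le_of_inter_nonempty hg hgf ⟨_, hf.lowerEnd_mem_SClass hk1, hmem⟩
    refine lt_of_le_of_ne hle fun h => ?_
    subst h
    exact hf.lowerEnd_notMem_SClass hg (hf.isLittleO_of_not_proportional hg hgf hne) hk1 hmem
  · obtain ⟨K, hK⟩ := hf.exists_mem_SClass hg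
    refine Set.Infinite.of_image Prod.fst ((Set.Ici_infinite K).mono fun k hk => ?_)
    obtain ⟨h1, l, h2, h3⟩ := hK k hk
    exact ⟨(k, l), ⟨h1, h2, h3⟩, rfl⟩
end
end
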